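/- arXiv:1004.5373 — 2 statements merged into one kernel-verified Lean document; each statement's English description precedes it below -/
import Mathlib

section
/- In the Intermediate regime (n^{3/2}V(A(n))/k(n) → λ and m(n)/(k(n)·n^{1/2}) → c for fixed constants λ, c > 0, with k(n)/√n → ∞), fix ε > 0 and set μ_I = −kn/(2m) + k²n/(4m²) + V(A)n²/(2m). Then both under ST(m,n) and under PL_A(m,n), with probability tending to 1 as n → ∞ the sampled configuration Z satisfies simultaneously: (i) if I_A(Z) ≥ μ_I + ε then PL_A(Z) > ST(Z), and (ii) if I_A(Z) ≤ μ_I − ε then ST(Z) > PL_A(Z). -/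
/-!
For a configuration `z` dominating the planting,
`log (PL_A z / ST z) = ∑ i, ∑_{j < a i} log (z i - j) - ∑_{l < k} log (m - l) + k log n`
(`log_plProb_sub`). Put `N = m / n` and `z i = N (1 + q i)`. Expanding the logarithms to fourth order
in `q i` (`log_expand`) gives a deterministic part plus weighted power sums
`∑ i, σ_p(a i) (q i) ^ p` with `σ_p(a) = ∑_{j < a} (N / (N - j)) ^ p ≈ a`. Replacing `σ_1` and `σ_2` by
`a` in the first two of them produces exactly the statistic `I_A`.

What is left is shown to equal `-μ_I` up to an error of expectation `O(η)`, with `η = n ^ (-1/4)`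
(`main_bound`). The deterministic part is evaluated with Stirling's expansion (`det_part`), and the
mean values of the corrections of order two, three and four are computed in `det_vals`; with
`u = k / m` they contribute `-n u² / 2 + n u / (12 N)`, which turns the Stirling value into `-μ_I`.
The fluctuations of a weighted power sum are controlled by splitting its weights into their mean and
a part summing to zero (`term_gen`). The constant part is a plain power sum, a combination of Charlier
polynomials of the loads, and these are almost uncorrelated across bins (`Ex_powSum`). The part
summing to zero has small second moment by exchangeability of the bins (`Ex_weighted`), because the
empirical variance of the weights is bounded by that of `a`.

Both distributions are treated at once: `PL_A` adds `a` to a uniform throw of `m - k` balls, which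
shifts the normalised loads by a vector `t` with `∑ i, (t i)² = O(1)` (`Model`, `Reg.model`).
Markov's inequality then bounds the probability that the threshold test disagrees with the likelihood
comparison by `O(η)` (`prob_bound`). All estimates hold for a fixed `n` under the hypotheses `Reg`,
which the asymptotic assumptions imply for large `n` (`eventually_reg`); there integrality of the
planting is needed, to see that `n ≤ 2 k` and hence that `N` is at least of order `√n`.
-/

open Finset Filter Topology

/-- Probability of configuration `z` of `m` balls in `n` bins under the standard
(uniform multinomial) distribution ST(m,n). -/
noncomputable def stProb (n m : ℕ) (z : Fin n → ℕ) : ℝ :=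
  if ∑ i, z i = m then
    ((Nat.factorial m : ℝ) / ∏ i, (Nat.factorial (z i) : ℝ)) * ((n : ℝ))⁻¹ ^ m
  else 0

/-- Probability of configuration `z` of `m` balls in `n` bins under the planted
distribution PL_A(m,n) with planting `a`. -/
noncomputable def plProb (n m : ℕ) (a : Fin n → ℕ) (z : Fin n → ℕ) : ℝ :=
  if (∑ i, z i = m) ∧ (∀ i, a i ≤ z i) then
    ((Nat.factorial (m - ∑ i, a i) : ℝ) / ∏ i, (Nat.factorial (z i - a i) : ℝ)) *
      ((n : ℝ))⁻¹ ^ (m - ∑ i, a i)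
  else 0

/-- Expectation of a statistic `T` with respect to a probability function `p` on
configurations. -/
noncomputable def expec {n : ℕ} (p : (Fin n → ℕ) → ℝ) (T : (Fin n → ℕ) → ℝ) : ℝ :=
  ∑' z : Fin n → ℕ, p z * T z

/-- Variance of a statistic `T` with respect to a probability function `p`. -/
noncomputable def varOf {n : ℕ} (p : (Fin n → ℕ) → ℝ) (T : (Fin n → ℕ) → ℝ) : ℝ :=
  ∑' z : Fin n → ℕ, p z * (T z - expec p T) ^ 2

/-- Probability of a set `s` of configurations with respect to a probability
function `p`. -/
noncomputable def probOf {n : ℕ} (p : (Fin n → ℕ) → ℝ) (s : Set (Fin n → ℕ)) : ℝ :=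
  ∑' z : Fin n → ℕ, Set.indicator s p z

/-- `V(A) = (Σ_i a_i²)/n − k²/n²` where `k = Σ_i a_i`. -/
noncomputable def plantV (n : ℕ) (a : Fin n → ℕ) : ℝ :=
  (∑ i, (a i : ℝ) ^ 2) / n - ((∑ i, (a i : ℝ)) / n) ^ 2

/-- `q_i = (n/m)(z_i − m/n)`. -/
noncomputable def qStat (n m : ℕ) (z : Fin n → ℕ) (i : Fin n) : ℝ :=
  ((n : ℝ) / m) * ((z i : ℝ) - (m : ℝ) / n)

/-- The Hilly-regime statistic `H_A(Z) = Σ_i a_i q_i`. -/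
noncomputable def HStat (n m : ℕ) (a : Fin n → ℕ) (z : Fin n → ℕ) : ℝ :=
  ∑ i, (a i : ℝ) * qStat n m z i

/-- The Flat-regime statistic `F_A(Z) = Σ_i a_i q_i²`. -/
noncomputable def FStat (n m : ℕ) (a : Fin n → ℕ) (z : Fin n → ℕ) : ℝ :=
  ∑ i, (a i : ℝ) * qStat n m z i ^ 2

/-- The Intermediate-regime statistic `I_A(Z) = Σ_i a_i q_i − (1/2) Σ_i a_i q_i²`. -/
noncomputable def IStat (n m : ℕ) (a : Fin n → ℕ) (z : Fin n → ℕ) : ℝ :=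
  HStat n m a z - (1/2) * FStat n m a z

/-- The standard normal cumulative distribution function `Φ`. -/
noncomputable def stdNormalCDF (x : ℝ) : ℝ :=
  ∫ t in Set.Iic x, Real.exp (-t ^ 2 / 2) / Real.sqrt (2 * Real.pi)

/-- Total variation distance `TV_A(m,n)` between ST(m,n) and PL_A(m,n). -/
noncomputable def tvDist (n m : ℕ) (a : Fin n → ℕ) : ℝ :=
  (1/2) * ∑' z : Fin n → ℕ, |stProb n m z - plProb n m a z|

/-- The Flat regime: `n^{3/2} V(A)/k → 0` and `m/(k n^{1/2}) → c`. -/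
def FlatRegime (A : (n : ℕ) → Fin n → ℕ) (m k : ℕ → ℕ) (c : ℝ) : Prop :=
  Tendsto (fun n : ℕ => (n : ℝ) ^ ((3 : ℝ)/2) * plantV n (A n) / (k n : ℝ)) atTop (𝓝 0) ∧
  Tendsto (fun n : ℕ => (m n : ℝ) / ((k n : ℝ) * Real.sqrt n)) atTop (𝓝 c)

/-- The Intermediate regime: `n^{3/2} V(A)/k → λ` and `m/(k n^{1/2}) → c`. -/
def IntermediateRegime (A : (n : ℕ) → Fin n → ℕ) (m k : ℕ → ℕ) (lam c : ℝ) : Prop :=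
  Tendsto (fun n : ℕ => (n : ℝ) ^ ((3 : ℝ)/2) * plantV n (A n) / (k n : ℝ)) atTop (𝓝 lam) ∧
  Tendsto (fun n : ℕ => (m n : ℝ) / ((k n : ℝ) * Real.sqrt n)) atTop (𝓝 c)

/-- The Hilly regime: `n^{3/2} V(A)/k → ∞` and `m/(V(A) n²) → c`. -/
def HillyRegime (A : (n : ℕ) → Fin n → ℕ) (m k : ℕ → ℕ) (c : ℝ) : Prop :=
  Tendsto (fun n : ℕ => (n : ℝ) ^ ((3 : ℝ)/2) * plantV n (A n) / (k n : ℝ)) atTop atTop ∧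
  Tendsto (fun n : ℕ => (m n : ℝ) / (plantV n (A n) * (n : ℝ) ^ 2)) atTop (𝓝 c)

/-- One of the three regimes holds (with its positive constants). -/
def SomeRegime (A : (n : ℕ) → Fin n → ℕ) (m k : ℕ → ℕ) : Prop :=
  (∃ c : ℝ, 0 < c ∧ FlatRegime A m k c) ∨
  (∃ lam c : ℝ, 0 < lam ∧ 0 < c ∧ IntermediateRegime A m k lam c) ∨
  (∃ c : ℝ, 0 < c ∧ HillyRegime A m k c)

/-- `μ_I = −kn/(2m) + k²n/(4m²) + V(A)n²/(2m)`. -/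
noncomputable def muI (n m : ℕ) (a : Fin n → ℕ) : ℝ :=
  -((∑ i, (a i : ℝ)) * n / (2 * m)) + (∑ i, (a i : ℝ)) ^ 2 * n / (4 * (m : ℝ) ^ 2) +
    plantV n a * (n : ℝ) ^ 2 / (2 * m)

/-! ### Expectations under ST, likelihoods and factorial moments -/

/-- Expectation of `f` under `ST(m,n)`, written as a finite sum over the configurations of
total `m` (the support of `stProb n m`). -/
noncomputable def Ex (n m : ℕ) (f : (Fin n → ℕ) → ℝ) : ℝ :=
  ∑ z ∈ piAntidiag (univ : Finset (Fin n)) m, stProb n m z * f z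

lemma mem_cfg {n m : ℕ} {z : Fin n → ℕ} :
    z ∈ piAntidiag (univ : Finset (Fin n)) m ↔ ∑ i, z i = m := by
  simp

lemma stProb_nonneg (n m : ℕ) (z : Fin n → ℕ) : 0 ≤ stProb n m z := by
  unfold stProb; split_ifs <;> positivity

lemma Ex_congr {n m : ℕ} {f g : (Fin n → ℕ) → ℝ} (h : ∀ z, ∑ i, z i = m → f z = g z) :
    Ex n m f = Ex n m g :=
  sum_congr rfl fun z hz => by rw [h z (mem_cfg.1 hz)]

lemma Ex_mono {n m : ℕ} {f g : (Fin n → ℕ) → ℝ} (h : ∀ z, ∑ i, z i = m → f z ≤ g z) :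
    Ex n m f ≤ Ex n m g :=
  sum_le_sum fun z hz => mul_le_mul_of_nonneg_left (h z (mem_cfg.1 hz)) (stProb_nonneg n m z)

lemma Ex_add (n m : ℕ) (f g : (Fin n → ℕ) → ℝ) :
    Ex n m (fun z => f z + g z) = Ex n m f + Ex n m g := by
  simp [Ex, mul_add, sum_add_distrib]

lemma Ex_mul (n m : ℕ) (c : ℝ) (f : (Fin n → ℕ) → ℝ) :
    Ex n m (fun z => c * f z) = c * Ex n m f := by
  simp only [Ex, mul_sum]; exact sum_congr rfl fun z _ => by ring

lemma Ex_sum {ι : Type*} (n m : ℕ) (s : Finset ι) (f : ι → (Fin n → ℕ) → ℝ) :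
    Ex n m (fun z => ∑ i ∈ s, f i z) = ∑ i ∈ s, Ex n m (f i) := by
  simp only [Ex, mul_sum]; exact sum_comm

lemma Ex_nonneg {n m : ℕ} {f : (Fin n → ℕ) → ℝ} (h : ∀ z, ∑ i, z i = m → 0 ≤ f z) :
    0 ≤ Ex n m f :=
  sum_nonneg fun z hz => mul_nonneg (stProb_nonneg n m z) (h z (mem_cfg.1 hz))

/-- The probability generating function of the multinomial distribution. -/
lemma Ex_pgf (n m : ℕ) (x : Fin n → ℝ) :
    Ex n m (fun z => ∏ i, x i ^ z i) = ((∑ i, x i) * (n : ℝ)⁻¹) ^ m := by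
  rw [mul_pow, sum_pow_eq_sum_piAntidiag, sum_mul]
  refine sum_congr rfl fun z hz => ?_
  have hz' := mem_cfg.1 hz
  have h := Nat.multinomial_spec (univ : Finset (Fin n)) z
  rw [hz'] at h
  have h2 : ((∏ i, (Nat.factorial (z i) : ℝ)) * (Nat.multinomial univ z : ℝ))
      = (Nat.factorial m : ℝ) := by exact_mod_cast h
  have h3 : (∏ i, (Nat.factorial (z i) : ℝ)) ≠ 0 :=
    prod_ne_zero_iff.2 fun i _ => by positivity
  rw [stProb, if_pos hz', ← h2]
  field_simp

lemma Ex_const {n : ℕ} (hn : 0 < n) (m : ℕ) (c : ℝ) : Ex n m (fun _ => c) = c := by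
  have h := Ex_pgf n m (fun _ => 1)
  have hn' : (n : ℝ) ≠ 0 := by positivity
  simp [hn'] at h
  have := Ex_mul n m c (fun _ => 1)
  simpa [h] using this

/-- `(E|f|)² ≤ E f²`. -/
lemma Ex_abs_sq_le {n : ℕ} (hn : 0 < n) (m : ℕ) (f : (Fin n → ℕ) → ℝ) :
    (Ex n m (fun z => |f z|)) ^ 2 ≤ Ex n m (fun z => f z ^ 2) := by
  set e := Ex n m (fun z => |f z|) with he
  have h : 0 ≤ Ex n m (fun z => (|f z| - e) ^ 2) := Ex_nonneg fun z _ => sq_nonneg _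
  have h2 : Ex n m (fun z => (|f z| - e) ^ 2)
      = Ex n m (fun z => f z ^ 2) + ((-2 * e) * e + e ^ 2) := by
    rw [show (fun z => (|f z| - e) ^ 2) =
      fun z => f z ^ 2 + ((-2 * e) * |f z| + e ^ 2) by
        funext z; rw [← sq_abs (f z)]; ring]
    rw [Ex_add, Ex_add, Ex_mul, Ex_const hn, ← he]
  nlinarith

lemma plProb_add {n m : ℕ} (a y : Fin n → ℕ) (hk : ∑ i, a i ≤ m) :
    plProb n m a (fun i => a i + y i) = stProb n (m - ∑ i, a i) y := by
  unfold plProb stProb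
  have : (∑ i, (a i + y i) = m ∧ ∀ i, a i ≤ a i + y i) ↔ ∑ i, y i = m - ∑ i, a i := by
    rw [sum_add_distrib]
    constructor
    · rintro ⟨h, _⟩; omega
    · intro h; exact ⟨by omega, fun i => by omega⟩
  simp only [this, Nat.add_sub_cancel_left]

open Classical in
/-- Sampling from `PL_A` means adding the planting to a standard sample of `m - k` balls. -/
lemma probOf_plProb {n m : ℕ} (a : Fin n → ℕ) (hk : ∑ i, a i ≤ m) (s : Set (Fin n → ℕ)) :
    probOf (plProb n m a) s =
      Ex n (m - ∑ i, a i) (fun y => if (fun i => a i + y i) ∈ s then 1 else 0) := by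
  unfold probOf Ex
  have hinj : Function.Injective (fun y : Fin n → ℕ => fun i => a i + y i) := by
    intro y y' h; funext i; have := congrFun h i; simpa using this
  rw [← hinj.tsum_eq]
  · rw [tsum_eq_sum (s := piAntidiag (univ : Finset (Fin n)) (m - ∑ i, a i))]
    · refine sum_congr rfl fun y _ => ?_
      by_cases hs : (fun i => a i + y i) ∈ s <;>
        simp [Set.indicator_apply, plProb_add a y hk, hs]
    · intro y hy
      rw [Set.indicator_apply, plProb_add a y hk]
      have : stProb n (m - ∑ i, a i) y = 0 := by
        unfold stProb; rw [if_neg]; exact fun h => hy (mem_cfg.2 h)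
      simp [this]
  · intro z hz
    have : plProb n m a z ≠ 0 := fun h => hz (by simp [Set.indicator_apply, h])
    unfold plProb at this
    have h : (∑ i, z i = m) ∧ (∀ i, a i ≤ z i) := by
      by_contra h; simp [h] at this
    exact ⟨fun i => z i - a i, funext fun i => by have := h.2 i; simp; omega⟩

lemma stProb_eq_plProb_zero (n m : ℕ) : stProb n m = plProb n m (fun _ => 0) := by
  funext z; simp [stProb, plProb]

/-- Permuting the bins does not change the standard distribution. -/
lemma Ex_perm (n m : ℕ) (σ : Equiv.Perm (Fin n)) (f : (Fin n → ℕ) → ℝ) :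
    Ex n m (fun z => f (fun i => z (σ i))) = Ex n m f := by
  unfold Ex
  refine sum_equiv (Equiv.arrowCongr σ.symm (Equiv.refl ℕ)) ?_ ?_
  · intro z
    simp only [mem_cfg]
    have : ∑ i, z (σ i) = ∑ i, z i := Equiv.sum_comp σ z
    simp [Equiv.arrowCongr, Function.comp_def, this]
  · intro z _
    have h1 : ∑ i, z (σ i) = ∑ i, z i := Equiv.sum_comp σ z
    have h2 : ∏ i, (Nat.factorial (z (σ i)) : ℝ) = ∏ i, (Nat.factorial (z i) : ℝ) :=
      Equiv.prod_comp σ (fun i => (Nat.factorial (z i) : ℝ))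
    simp [Equiv.arrowCongr, Function.comp_def, stProb, h1, h2]

/-- The likelihood ratio as a quotient of falling factorials. It also turns factorial moments under
`ST` into total masses of planted distributions. -/
lemma stProb_mul_descFactorial {n m : ℕ} (hn : 0 < n) (c z : Fin n → ℕ) (hc : ∑ i, c i ≤ m) :
    stProb n m z * ∏ i, ((z i).descFactorial (c i) : ℝ) =
      ((m.descFactorial (∑ i, c i) : ℝ) * (n : ℝ)⁻¹ ^ (∑ i, c i)) * plProb n m c z := by
  unfold stProb plProb
  by_cases h1 : ∑ i, z i = m
  · by_cases h2 : ∀ i, c i ≤ z i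
    · rw [if_pos h1, if_pos ⟨h1, h2⟩]
      have e1 : ∏ i, (Nat.factorial (z i) : ℝ) = (∏ i, (Nat.factorial (z i - c i) : ℝ)) *
          ∏ i, ((z i).descFactorial (c i) : ℝ) := by
        rw [← prod_mul_distrib]
        refine prod_congr rfl fun i _ => ?_
        exact_mod_cast (Nat.factorial_mul_descFactorial (h2 i)).symm
      have e2 : (Nat.factorial m : ℝ) = Nat.factorial (m - ∑ i, c i) *
          m.descFactorial (∑ i, c i) := by
        exact_mod_cast (Nat.factorial_mul_descFactorial hc).symm
      have e3 : ((n : ℝ)⁻¹) ^ m = (n : ℝ)⁻¹ ^ (∑ i, c i) * (n : ℝ)⁻¹ ^ (m - ∑ i, c i) := by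
        rw [← pow_add]; congr 1; omega
      have p1 : (∏ i, (Nat.factorial (z i - c i) : ℝ)) ≠ 0 :=
        prod_ne_zero_iff.2 fun i _ => by positivity
      have p2 : (∏ i, ((z i).descFactorial (c i) : ℝ)) ≠ 0 :=
        prod_ne_zero_iff.2 fun i _ => by
          have := Nat.descFactorial_pos.2 (h2 i)
          positivity
      rw [e1, e2, e3]
      field_simp
    · rw [if_neg (c := _ ∧ _) (fun h => h2 h.2)]
      push Not at h2
      obtain ⟨i, hi⟩ := h2
      have : ∏ i, ((z i).descFactorial (c i) : ℝ) = 0 :=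
        prod_eq_zero (mem_univ i) (by exact_mod_cast Nat.descFactorial_eq_zero_iff_lt.2 hi)
      simp [this]
  · rw [if_neg h1, if_neg (fun h => h1 h.1)]; simp

lemma Ex_prod_descFactorial {n m : ℕ} (hn : 0 < n) (c : Fin n → ℕ) (hc : ∑ i, c i ≤ m) :
    Ex n m (fun z => ∏ i, ((z i).descFactorial (c i) : ℝ)) =
      (m.descFactorial (∑ i, c i) : ℝ) * (n : ℝ)⁻¹ ^ (∑ i, c i) := by
  have h1 : probOf (plProb n m c) Set.univ = 1 := by
    rw [probOf_plProb c hc]; simp [Ex_const hn]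
  have h2 : probOf (plProb n m c) Set.univ =
      ∑ z ∈ piAntidiag (univ : Finset (Fin n)) m, plProb n m c z := by
    unfold probOf
    rw [Set.indicator_univ]
    refine tsum_eq_sum fun z hz => ?_
    unfold plProb; rw [if_neg]; exact fun h => hz (mem_cfg.2 h.1)
  unfold Ex
  simp_rw [stProb_mul_descFactorial hn c _ hc]
  rw [← mul_sum, ← h2, h1, mul_one]

/-- Joint factorial moments of two distinct bins. -/
lemma Ex_desc_pair {n m : ℕ} {i j : Fin n} (hij : i ≠ j) (p q : ℕ) (hm : p + q ≤ m) :
    Ex n m (fun z => ((z i).descFactorial p : ℝ) * ((z j).descFactorial q : ℝ)) =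
      (m.descFactorial (p + q) : ℝ) * (n : ℝ)⁻¹ ^ (p + q) := by
  have hn : 0 < n := i.pos
  set c : Fin n → ℕ := fun l => if l = i then p else if l = j then q else 0 with hcdef
  have hc : ∑ l, c l = p + q := by
    rw [← Finset.add_sum_erase univ c (mem_univ i),
      ← Finset.add_sum_erase _ c (mem_erase.2 ⟨hij.symm, mem_univ j⟩)]
    rw [Finset.sum_eq_zero]
    · simp [c, hij.symm]
    · intro l hl; simp at hl; simp [c, hl]
  have := Ex_prod_descFactorial (m := m) hn c (hc.le.trans hm)
  rw [hc] at this
  rw [← this]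
  refine Ex_congr fun z _ => ?_
  rw [← Finset.mul_prod_erase univ _ (mem_univ i),
      ← Finset.mul_prod_erase _ _ (mem_erase.2 ⟨hij.symm, mem_univ j⟩)]
  rw [Finset.prod_eq_one (s := (univ.erase i).erase j)]
  · simp [c, hij.symm]
  · intro l hl; simp at hl; simp [c, hl]

/-! ### Moments of the loads and exchangeability -/

/-- The deviation `(y_i - m/n)/s` of bin `i` from its mean, in units of `s`. -/
noncomputable def dev (n m : ℕ) (s : ℝ) (y : Fin n → ℕ) (i : Fin n) : ℝ :=
  ((y i : ℝ) - (m : ℝ) / n) / s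

lemma Ex_exp_coord (n m : ℕ) (i : Fin n) (θ : ℝ) :
    Ex n m (fun y => Real.exp (θ * y i)) ≤ Real.exp ((m : ℝ) / n * (Real.exp θ - 1)) := by
  have hn : (0 : ℝ) < n := by exact_mod_cast i.pos
  have h := Ex_pgf n m (fun l => if l = i then Real.exp θ else 1)
  have e1 : ∑ l : Fin n, (if l = i then Real.exp θ else 1) = n + (Real.exp θ - 1) := by
    rw [sum_congr rfl (g := fun l => (if l = i then Real.exp θ - 1 else 0) + 1)
      (fun l _ => by split_ifs <;> ring), sum_add_distrib]
    simp; ring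
  have e2 : ∀ y : Fin n → ℕ, ∏ l, (if l = i then Real.exp θ else 1) ^ y l
      = Real.exp (θ * y i) := by
    intro y
    rw [prod_eq_single i]
    · simp [← Real.exp_nat_mul, mul_comm]
    · intro l _ hl; simp [hl]
    · simp
  simp_rw [e2, e1] at h
  rw [h]
  have h3 : ((n : ℝ) + (Real.exp θ - 1)) * (n : ℝ)⁻¹ = (Real.exp θ - 1) / n + 1 := by
    field_simp; ring
  rw [h3]
  have h4 : 0 ≤ (Real.exp θ - 1) / n + 1 := by
    rw [← h3]
    have h1 : (1 : ℝ) ≤ n := by exact_mod_cast i.pos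
    have := Real.exp_pos θ
    exact mul_nonneg (by linarith) (by positivity)
  calc ((Real.exp θ - 1) / n + 1) ^ m ≤ (Real.exp ((Real.exp θ - 1) / n)) ^ m :=
        pow_le_pow_left₀ h4 (Real.add_one_le_exp _) m
    _ = _ := by rw [← Real.exp_nat_mul]; congr 1; ring

/-- Deviations at the scale `s ≥ √(m/n)` have a bounded exponential moment; this yields all
polynomial moments at once. -/
lemma Ex_exp_dev {n m : ℕ} {s : ℝ} (hs : 1 ≤ s) (hN : (m : ℝ) / n ≤ s ^ 2) (i : Fin n) :
    Ex n m (fun y => Real.exp |dev n m s y i|) ≤ 6 := by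
  have hs0 : 0 < s := by linarith
  have key : ∀ θ : ℝ, |θ| = 1 / s →
      Ex n m (fun y => Real.exp (θ * ((y i : ℝ) - (m : ℝ) / n))) ≤ 3 := by
    intro θ hθ
    have hθ1 : |θ| ≤ 1 := by rw [hθ]; exact (div_le_one hs0).2 hs
    have h1 := Ex_exp_coord n m i θ
    have h2 : Ex n m (fun y => Real.exp (θ * ((y i : ℝ) - (m : ℝ) / n)))
        = Real.exp (-(θ * ((m : ℝ) / n))) * Ex n m (fun y => Real.exp (θ * y i)) := by
      rw [← Ex_mul]
      refine Ex_congr fun y _ => ?_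
      rw [← Real.exp_add]; congr 1; ring
    rw [h2]
    have h3 := Real.abs_exp_sub_one_sub_id_le hθ1
    have h4 : (m : ℝ) / n * (Real.exp θ - 1 - θ) ≤ 1 := by
      have h5 : Real.exp θ - 1 - θ ≤ θ ^ 2 := le_trans (le_abs_self _) h3
      have h6 : θ ^ 2 = 1 / s ^ 2 := by rw [← sq_abs, hθ]; field_simp
      calc (m : ℝ) / n * (Real.exp θ - 1 - θ) ≤ (m : ℝ) / n * θ ^ 2 :=
            mul_le_mul_of_nonneg_left h5 (by positivity)
        _ ≤ s ^ 2 * θ ^ 2 := mul_le_mul_of_nonneg_right hN (sq_nonneg _)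
        _ = 1 := by rw [h6]; field_simp
    calc Real.exp (-(θ * ((m : ℝ) / n))) * Ex n m (fun y => Real.exp (θ * y i))
        ≤ Real.exp (-(θ * ((m : ℝ) / n))) * Real.exp ((m : ℝ) / n * (Real.exp θ - 1)) :=
          mul_le_mul_of_nonneg_left h1 (Real.exp_pos _).le
      _ = Real.exp ((m : ℝ) / n * (Real.exp θ - 1 - θ)) := by
          rw [← Real.exp_add]; congr 1; ring
      _ ≤ Real.exp 1 := Real.exp_le_exp.2 h4
      _ ≤ 3 := Real.exp_one_lt_three.le
  have k1 := key (1 / s) (abs_of_pos (by positivity))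
  have k2 := key (-(1 / s)) (by rw [abs_neg]; exact abs_of_pos (by positivity))
  calc _ ≤ Ex n m (fun y => Real.exp (1 / s * ((y i : ℝ) - (m : ℝ) / n)) +
        Real.exp (-(1 / s) * ((y i : ℝ) - (m : ℝ) / n))) := by
        refine Ex_mono fun y _ => ?_
        have e : dev n m s y i = 1 / s * ((y i : ℝ) - (m : ℝ) / n) := by unfold dev; ring
        rw [neg_mul, ← e]
        rcases abs_cases (dev n m s y i) with ⟨h, _⟩ | ⟨h, _⟩ <;> rw [h]
        · linarith [Real.exp_pos (-dev n m s y i)]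
        · linarith [Real.exp_pos (dev n m s y i)]
    _ ≤ 6 := by rw [Ex_add]; linarith

lemma Ex_pow_dev {n m : ℕ} {s : ℝ} (hs : 1 ≤ s) (hN : (m : ℝ) / n ≤ s ^ 2) (i : Fin n)
    (p : ℕ) {T : ℝ} (hT : 0 ≤ T) :
    Ex n m (fun y => (|dev n m s y i| + T) ^ p) ≤ p.factorial * Real.exp T * 6 := by
  calc _ ≤ Ex n m (fun y => (p.factorial * Real.exp T) * Real.exp |dev n m s y i|) := by
        refine Ex_mono fun y _ => ?_
        have h := Real.pow_div_factorial_le_exp (x := |dev n m s y i| + T) (by positivity) p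
        rw [div_le_iff₀ (by positivity), Real.exp_add] at h
        linarith
    _ ≤ _ := by
        rw [Ex_mul]
        exact mul_le_mul_of_nonneg_left (Ex_exp_dev hs hN i) (by positivity)

/-- The second moment of a sum whose cross terms have expectation at most `Q / n` is of the order
of that of a sum of `n` independent terms. -/
lemma Ex_sum_sq_le {n m : ℕ} (f : Fin n → (Fin n → ℕ) → ℝ) {P Q : ℝ} (hQ : 0 ≤ Q)
    (h1 : ∀ i, Ex n m (fun y => f i y ^ 2) ≤ P)
    (h2 : ∀ i j, i ≠ j → Ex n m (fun y => f i y * f j y) ≤ Q / n) :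
    Ex n m (fun y => (∑ i, f i y) ^ 2) ≤ n * (P + Q) := by
  rcases Nat.eq_zero_or_pos n with rfl | hn
  · simp [Ex]
  have hn' : (0 : ℝ) < n := by exact_mod_cast hn
  have e : Ex n m (fun y => (∑ i, f i y) ^ 2)
      = ∑ i, ∑ j, Ex n m (fun y => f i y * f j y) := by
    simp_rw [← Ex_sum]
    refine Ex_congr fun y _ => ?_
    rw [sq, sum_mul_sum]
  rw [e]
  calc _ ≤ ∑ i : Fin n, ∑ j : Fin n, ((if i = j then P else 0) + Q / n) := by
        refine sum_le_sum fun i _ => sum_le_sum fun j _ => ?_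
        split_ifs with h
        · subst h
          have := h1 i
          simp_rw [sq] at this
          have : 0 ≤ Q / n := by positivity
          linarith
        · linarith [h2 i j h]
    _ = _ := by
        simp [sum_add_distrib]
        field_simp

/-- A linear statistic with weights summing to zero: by exchangeability the off-diagonal
covariances are a common constant, which the weights annihilate. -/
lemma Ex_exch {n m : ℕ} (ω : Fin n → ℝ) (hω : ∑ i, ω i = 0) (G : ℕ → ℝ) {B : ℝ}
    (hB : ∀ i : Fin n, Ex n m (fun y => G (y i) ^ 2) ≤ B) :
    Ex n m (fun y => (∑ i, ω i * G (y i)) ^ 2) ≤ 2 * B * ∑ i, ω i ^ 2 := by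
  have e : Ex n m (fun y => (∑ i, ω i * G (y i)) ^ 2)
      = ∑ i, ∑ j, ω i * ω j * Ex n m (fun y => G (y i) * G (y j)) := by
    simp_rw [← Ex_mul, ← Ex_sum]
    refine Ex_congr fun y _ => ?_
    rw [sq, sum_mul_sum]
    exact sum_congr rfl fun i _ => sum_congr rfl fun j _ => by ring
  have hperm : ∀ (σ : Equiv.Perm (Fin n)) (i j : Fin n),
      Ex n m (fun y => G (y (σ i)) * G (y (σ j))) = Ex n m (fun y => G (y i) * G (y j)) :=
    fun σ i j => Ex_perm n m σ (fun y => G (y i) * G (y j))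
  have hconst : ∃ h : ℝ, ∀ i j, i ≠ j → Ex n m (fun y => G (y i) * G (y j)) = h := by
    by_cases hex : ∃ i j : Fin n, i ≠ j
    · obtain ⟨i', j', hij'⟩ := hex
      refine ⟨Ex n m (fun y => G (y i') * G (y j')), fun i j hij => ?_⟩
      rw [← hperm (Equiv.swap i i') i j, Equiv.swap_apply_left]
      set j'' := Equiv.swap i i' j with hj
      have hj'' : j'' ≠ i' := by
        intro h
        apply hij
        have := (Equiv.swap i i').injective (a₁ := i) (a₂ := j)
        apply this; rw [Equiv.swap_apply_left, ← hj, h]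
      rw [← hperm (Equiv.swap j'' j') i' j'', Equiv.swap_apply_left,
        Equiv.swap_apply_of_ne_of_ne hj''.symm hij']
    · push Not at hex
      exact ⟨0, fun i j hij => absurd (hex i j) hij⟩
  obtain ⟨h, hh⟩ := hconst
  rw [e]
  have e2 : ∀ i, ∑ j, ω i * ω j * Ex n m (fun y => G (y i) * G (y j))
      = ω i ^ 2 * (Ex n m (fun y => G (y i) ^ 2) - h) + ω i * h * ∑ j, ω j := by
    intro i
    rw [mul_sum, ← Finset.add_sum_erase univ _ (mem_univ i),
      ← Finset.add_sum_erase univ (fun j => ω i * h * ω j) (mem_univ i)]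
    rw [sum_congr rfl (s₁ := univ.erase i) (g := fun j => ω i * h * ω j)]
    · simp_rw [← sq]; ring
    · intro j hj
      rw [hh i j (Finset.ne_of_mem_erase hj).symm]; ring
  simp_rw [e2, hω, mul_zero, add_zero]
  rw [mul_sum]
  refine sum_le_sum fun i _ => ?_
  rcases eq_or_ne (ω i) 0 with h0 | h0
  · simp [h0]
  -- a nonzero weight cannot be the only one, so a second bin exists
  have : ∃ j, i ≠ j := by
    by_contra hcon
    push Not at hcon
    apply h0
    rw [← hω]
    symm
    exact Finset.sum_eq_single i (fun j _ hj => absurd (hcon j).symm hj) (by simp)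
  obtain ⟨j, hij⟩ := this
  have hneg : -h ≤ B := by
    rw [← hh i j hij]
    have h1 : 0 ≤ Ex n m (fun y => (G (y i) + G (y j)) ^ 2) := Ex_nonneg fun _ _ => sq_nonneg _
    have h2 : Ex n m (fun y => (G (y i) + G (y j)) ^ 2) = Ex n m (fun y => G (y i) ^ 2) +
        (Ex n m (fun y => G (y j) ^ 2) + 2 * Ex n m (fun y => G (y i) * G (y j))) := by
      rw [← Ex_mul, ← Ex_add, ← Ex_add]
      exact Ex_congr fun y _ => by ring
    linarith [hB i, hB j]
  have := hB i
  nlinarith [sq_nonneg (ω i)]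

/-! ### Charlier polynomials -/

/-- The Charlier polynomial of degree `p` with parameter `N`, in the falling factorial basis. -/
noncomputable def charlier (p : ℕ) (N : ℝ) (z : ℕ) : ℝ :=
  ∑ a ∈ range (p + 1), (p.choose a : ℝ) * (-N) ^ (p - a) * (z.descFactorial a : ℝ)

lemma cast_desc (z j : ℕ) : (z.descFactorial j : ℝ) = ∏ l ∈ range j, ((z : ℝ) - l) := by
  induction j with
  | zero => simp
  | succ j ih =>
    rw [Nat.descFactorial_succ, prod_range_succ, ← ih, mul_comm]
    push_cast
    rcases le_or_gt j z with h | h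
    · rw [Nat.cast_sub h]
    · simp [Nat.descFactorial_eq_zero_iff_lt.2 h]

lemma charlier_two (N : ℝ) (z : ℕ) :
    charlier 2 N z = ((z : ℝ) - N) ^ 2 - ((z : ℝ) - N) - N := by
  simp only [charlier, cast_desc]
  simp [sum_range_succ, prod_range_succ]
  ring

lemma charlier_three (N : ℝ) (z : ℕ) :
    charlier 3 N z = ((z : ℝ) - N) ^ 3 - 3 * ((z : ℝ) - N) ^ 2
      + (2 - 3 * N) * ((z : ℝ) - N) + 2 * N := by
  simp only [charlier, cast_desc]
  simp [sum_range_succ, prod_range_succ, Nat.choose]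
  ring

lemma charlier_four (N : ℝ) (z : ℕ) :
    charlier 4 N z = ((z : ℝ) - N) ^ 4 - 6 * ((z : ℝ) - N) ^ 3
      + (11 - 6 * N) * ((z : ℝ) - N) ^ 2 + (14 * N - 6) * ((z : ℝ) - N)
      + (3 * N ^ 2 - 6 * N) := by
  simp only [charlier, cast_desc]
  simp [sum_range_succ, prod_range_succ, Nat.choose]
  ring

lemma Ex_charlier_pair {n m : ℕ} {i j : Fin n} (hij : i ≠ j) (p : ℕ) (N : ℝ)
    (hm : p + p ≤ m) :
    Ex n m (fun y => charlier p N (y i) * charlier p N (y j)) =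
      ∑ a ∈ range (p + 1), ∑ b ∈ range (p + 1), ((p.choose a : ℝ) * (-N) ^ (p - a)) *
        ((p.choose b : ℝ) * (-N) ^ (p - b)) *
        ∏ l ∈ range (a + b), ((m : ℝ) / n - l * (n : ℝ)⁻¹) := by
  have hterm : ∀ a ∈ range (p + 1), ∀ b ∈ range (p + 1),
      Ex n m (fun y => ((y i).descFactorial a : ℝ) * ((y j).descFactorial b : ℝ)) =
        ∏ l ∈ range (a + b), ((m : ℝ) / n - l * (n : ℝ)⁻¹) := by
    intro a ha b hb
    simp at ha hb
    rw [Ex_desc_pair hij a b (by omega), cast_desc, ← card_range (a + b), ← prod_const,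
      card_range, ← prod_mul_distrib]
    exact prod_congr rfl fun l _ => by ring
  rw [← sum_congr rfl fun a ha => sum_congr rfl fun b hb => by rw [← hterm a ha b hb]]
  simp_rw [← Ex_mul, ← Ex_sum]
  refine Ex_congr fun y _ => ?_
  unfold charlier
  rw [sum_mul_sum]
  exact sum_congr rfl fun a _ => sum_congr rfl fun b _ => by ring

/-- Two distinct bins: Charlier polynomials centred at the mean are almost uncorrelated. -/
lemma Ex_charlier_cov {n m : ℕ} {i j : Fin n} (hij : i ≠ j) (p : ℕ) (hp : p = 2 ∨ p = 3 ∨ p = 4)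
    (hm : 8 ≤ m) (hN : 1 ≤ (m : ℝ) / n) :
    Ex n m (fun y => charlier p ((m : ℝ) / n) (y i) * charlier p ((m : ℝ) / n) (y j)) ≤
      10000 * ((m : ℝ) / n) ^ p / n := by
  rw [Ex_charlier_pair hij p _ (by omega)]
  have hn : (0 : ℝ) < n := by exact_mod_cast i.pos
  have hn1 : (1 : ℝ) ≤ n := by exact_mod_cast i.pos
  set N := (m : ℝ) / n with hNdef
  rw [div_eq_mul_inv _ (n : ℝ)]
  set x := (n : ℝ)⁻¹ with hx
  have hx0 : 0 < x := by positivity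
  have hx1 : x ≤ 1 := inv_le_one_of_one_le₀ hn1
  have hxp : ∀ q : ℕ, x ^ (q + 1) ≤ x := fun q => by
    rw [pow_succ]; exact mul_le_of_le_one_left hx0.le (pow_le_one₀ hx0.le hx1)
  have hb : ∀ q r t : ℕ, q ≤ r → N ^ q * x ^ (t + 1) ≤ N ^ r * x := fun q r t h =>
    mul_le_mul (pow_le_pow_right₀ hN h) (hxp t) (by positivity) (by positivity)
  have hN0 : 0 < N := by linarith
  rcases hp with rfl | rfl | rfl
  · have e : (∑ a ∈ range (2 + 1), ∑ b ∈ range (2 + 1), (((2 : ℕ).choose a : ℝ) * (-N) ^ (2 - a)) *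
        (((2 : ℕ).choose b : ℝ) * (-N) ^ (2 - b)) *
        ∏ l ∈ range (a + b), (N - l * x)) = 3 * (N ^ 2 * x ^ 2) - 6 * (N ^ 1 * x ^ 3) := by
      simp [sum_range_succ, prod_range_succ, Nat.choose]; ring
    rw [e]
    have h1 := hb 2 2 1 le_rfl
    have h2 : 0 < N ^ 1 * x ^ 3 := by positivity
    have h3 : 0 < N ^ 2 * x := by positivity
    norm_num at *
    linarith
  · have e : (∑ a ∈ range (3 + 1), ∑ b ∈ range (3 + 1), (((3 : ℕ).choose a : ℝ) * (-N) ^ (3 - a)) *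
        (((3 : ℕ).choose b : ℝ) * (-N) ^ (3 - b)) *
        ∏ l ∈ range (a + b), (N - l * x)) = -15 * (N ^ 3 * x ^ 3) + 130 * (N ^ 2 * x ^ 4)
          - 120 * (N ^ 1 * x ^ 5) := by
      simp [sum_range_succ, prod_range_succ, Nat.choose]; ring
    rw [e]
    have h1 := hb 2 3 3 (by norm_num)
    have h2 : 0 < N ^ 1 * x ^ 5 := by positivity
    have h3 : 0 < N ^ 3 * x := by positivity
    have h4 : 0 < N ^ 3 * x ^ 3 := by positivity
    norm_num at *
    linarith
  · have e : (∑ a ∈ range (4 + 1), ∑ b ∈ range (4 + 1), (((4 : ℕ).choose a : ℝ) * (-N) ^ (4 - a)) *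
        (((4 : ℕ).choose b : ℝ) * (-N) ^ (4 - b)) *
        ∏ l ∈ range (a + b), (N - l * x)) = 105 * (N ^ 4 * x ^ 4) - 2380 * (N ^ 3 * x ^ 5)
          + 7308 * (N ^ 2 * x ^ 6) - 5040 * (N ^ 1 * x ^ 7) := by
      simp [sum_range_succ, prod_range_succ, Nat.choose]; ring
    rw [e]
    have h1 := hb 4 4 3 (by norm_num)
    have h5 := hb 2 4 5 (by norm_num)
    have h2 : 0 < N ^ 1 * x ^ 7 := by positivity
    have h3 : 0 < N ^ 4 * x := by positivity
    have h4 : 0 < N ^ 3 * x ^ 5 := by positivity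
    norm_num at *
    linarith

lemma charlier_abs_le {N s g : ℝ} (z : ℕ) (hs : 1 ≤ s) (hN : 1 ≤ N) (hNs : N ≤ s ^ 2)
    (hg : ((z : ℝ) - N) = g * s) (p : ℕ) (hp : p = 2 ∨ p = 3 ∨ p = 4) :
    |charlier p N z| ≤ 60 * (s * (|g| + 1)) ^ p := by
  have hs0 : 0 < s := by linarith
  set w := s * (|g| + 1) with hw
  have hg0 := abs_nonneg g
  have hsw : s ≤ w := by rw [hw]; nlinarith
  have hw1 : 1 ≤ w := hs.trans hsw
  have hNw : N ≤ w ^ 2 := hNs.trans (pow_le_pow_left₀ hs0.le hsw 2)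
  have hr : |(z : ℝ) - N| ≤ w := by
    rw [hg, abs_mul, abs_of_pos hs0, hw]; nlinarith
  set r := (z : ℝ) - N with hrdef
  have hr2 : |r ^ 2| ≤ w ^ 2 := by rw [abs_pow]; exact pow_le_pow_left₀ (abs_nonneg _) hr 2
  have hr3 : |r ^ 3| ≤ w ^ 3 := by rw [abs_pow]; exact pow_le_pow_left₀ (abs_nonneg _) hr 3
  have hr4 : |r ^ 4| ≤ w ^ 4 := by rw [abs_pow]; exact pow_le_pow_left₀ (abs_nonneg _) hr 4
  have hNr : |N * r| ≤ w ^ 3 := by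
    rw [abs_mul, abs_of_pos (by linarith : 0 < N)]
    calc N * |r| ≤ w ^ 2 * w := mul_le_mul hNw hr (abs_nonneg _) (by positivity)
      _ = _ := by ring
  have hNr2 : |N * r ^ 2| ≤ w ^ 4 := by
    rw [abs_mul, abs_of_pos (by linarith : 0 < N)]
    calc N * |r ^ 2| ≤ w ^ 2 * w ^ 2 := mul_le_mul hNw hr2 (abs_nonneg _) (by positivity)
      _ = _ := by ring
  have hN2 : N ^ 2 ≤ w ^ 4 := by
    calc N ^ 2 ≤ (w ^ 2) ^ 2 := pow_le_pow_left₀ (by linarith) hNw 2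
      _ = _ := by ring
  have w12 : w ≤ w ^ 2 := by nlinarith
  have w23 : w ^ 2 ≤ w ^ 3 := pow_le_pow_right₀ hw1 (by norm_num)
  have w34 : w ^ 3 ≤ w ^ 4 := pow_le_pow_right₀ hw1 (by norm_num)
  rw [abs_le] at hr hr2 hr3 hr4 hNr hNr2
  have := sq_nonneg N
  rcases hp with rfl | rfl | rfl
  · rw [charlier_two, ← hrdef, abs_le]; constructor <;> linarith
  · rw [charlier_three, ← hrdef, abs_le]; constructor <;> linarith
  · rw [charlier_four, ← hrdef, abs_le]; constructor <;> linarith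

/-- Sums over all bins of Charlier polynomials are of the order of a sum of independent terms. -/
lemma Ex_charlier_sum {n m : ℕ} {s : ℝ} (hn : 0 < n) (hs : 1 ≤ s) (hm : 8 ≤ m)
    (hN : 1 ≤ (m : ℝ) / n) (hNs : (m : ℝ) / n ≤ s ^ 2) (p : ℕ) (hp : p = 2 ∨ p = 3 ∨ p = 4) :
    Ex n m (fun y => |(∑ i, charlier p ((m : ℝ) / n) (y i)) / s ^ p|) ≤ 10 ^ 6 * 40 * √n := by
  have hs0 : 0 < s := by linarith
  have hn' : (0 : ℝ) < n := by exact_mod_cast hn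
  have h1 : ∀ i, Ex n m (fun y => charlier p ((m : ℝ) / n) (y i) ^ 2) ≤
      (60 ^ 2 * (40320 * 3 * 6)) * s ^ (2 * p) := by
    intro i
    calc _ ≤ Ex n m (fun y => (60 ^ 2 * s ^ (2 * p)) * (|dev n m s y i| + 1) ^ (2 * p)) := by
          refine Ex_mono fun y _ => ?_
          have := charlier_abs_le (g := dev n m s y i) (y i) hs hN hNs
            (by unfold dev; field_simp) p hp
          calc _ = |charlier p ((m : ℝ) / n) (y i)| ^ 2 := (sq_abs _).symm
            _ ≤ _ := pow_le_pow_left₀ (abs_nonneg _) this 2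
            _ = _ := by rw [mul_pow s]; ring
      _ ≤ _ := by
          rw [Ex_mul]
          have h := Ex_pow_dev hs hNs i (2 * p) (T := 1) (by norm_num)
          have hf : ((2 * p).factorial : ℝ) ≤ 40320 := by
            have : (2 * p).factorial ≤ (8).factorial := Nat.factorial_le (by omega)
            have h8 : (8).factorial = 40320 := rfl
            rw [h8] at this
            exact_mod_cast this
          have h' : ((2 * p).factorial : ℝ) * Real.exp 1 * 6 ≤ 40320 * 3 * 6 := by
            gcongr; exact Real.exp_one_lt_three.le
          calc _ ≤ (60 ^ 2 * s ^ (2 * p)) * (40320 * 3 * 6) :=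
                mul_le_mul_of_nonneg_left (h.trans h') (by positivity)
            _ = _ := by ring
  have h2 : ∀ i j : Fin n, i ≠ j → Ex n m (fun y => charlier p ((m : ℝ) / n) (y i) *
      charlier p ((m : ℝ) / n) (y j)) ≤ (10000 * s ^ (2 * p)) / n := by
    intro i j hij
    refine (Ex_charlier_cov hij p hp hm hN).trans ?_
    gcongr
    rw [pow_mul]
    exact pow_le_pow_left₀ (by positivity) hNs p
  have h3 := Ex_sum_sq_le (fun i y => charlier p ((m : ℝ) / n) (y i))
    (by positivity : 0 ≤ 10000 * s ^ (2 * p)) h1 h2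
  have h4 := Ex_abs_sq_le hn m (fun y => (∑ i, charlier p ((m : ℝ) / n) (y i)) / s ^ p)
  have h5 : Ex n m (fun y => ((∑ i, charlier p ((m : ℝ) / n) (y i)) / s ^ p) ^ 2) =
      (1 / s ^ (2 * p)) * Ex n m (fun y => (∑ i, charlier p ((m : ℝ) / n) (y i)) ^ 2) := by
    rw [← Ex_mul]
    refine Ex_congr fun y _ => ?_
    rw [div_pow, ← pow_mul, mul_comm p 2]; ring
  have h6 : Ex n m (fun y => ((∑ i, charlier p ((m : ℝ) / n) (y i)) / s ^ p) ^ 2) ≤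
      (10 ^ 6 * 40 * √n) ^ 2 := by
    rw [h5]
    calc _ ≤ (1 / s ^ (2 * p)) * (n * ((60 ^ 2 * (40320 * 3 * 6)) * s ^ (2 * p)
            + 10000 * s ^ (2 * p))) := mul_le_mul_of_nonneg_left h3 (by positivity)
      _ = (60 ^ 2 * (40320 * 3 * 6) + 10000) * n := by field_simp
      _ ≤ _ := by rw [mul_pow, Real.sq_sqrt hn'.le]; gcongr; norm_num
  exact abs_le_of_sq_le_sq' (h4.trans h6) (by positivity) |>.2

/-! ### Weighted power sums -/

lemma abs_le_of_sum_sq {n : ℕ} {t : Fin n → ℝ} {K : ℝ} (hK : 1 ≤ K) (ht : ∑ i, t i ^ 2 ≤ K)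
    (i : Fin n) : |t i| ≤ K := by
  have h1 : t i ^ 2 ≤ K :=
    (single_le_sum (f := fun i => t i ^ 2) (fun j _ => sq_nonneg _) (mem_univ i)).trans ht
  exact abs_le_of_sq_le_sq (h1.trans (by nlinarith)) (by linarith)

lemma sum_abs_mul_le {n : ℕ} {c t : Fin n → ℝ} {K Q : ℝ} (hK : 1 ≤ K) (hQ : 0 ≤ Q)
    (ht : ∑ i, t i ^ 2 ≤ K) (hc : ∑ i, c i ^ 2 ≤ Q ^ 2) : ∑ i, |c i| * |t i| ≤ Q * K := by
  have h := sum_mul_sq_le_sq_mul_sq univ (fun i => |c i|) (fun i => |t i|)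
  simp only [sq_abs] at h
  refine abs_le_of_sq_le_sq' (h.trans ?_) (by positivity) |>.2
  calc _ ≤ Q ^ 2 * K := mul_le_mul hc ht (sum_nonneg fun i _ => sq_nonneg _) (by positivity)
    _ ≤ _ := by rw [mul_pow]; gcongr; nlinarith

/-- Expected effect of a deterministic shift `t` of the deviations on a weighted power sum. -/
lemma Ex_shift {n m : ℕ} {s K : ℝ} (hs : 1 ≤ s) (hN : (m : ℝ) / n ≤ s ^ 2) (hK : 1 ≤ K)
    (c t : Fin n → ℝ) (ht : ∑ i, t i ^ 2 ≤ K) (p : ℕ) :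
    Ex n m (fun y => ∑ i, |c i| * |(dev n m s y i + t i) ^ p - dev n m s y i ^ p|) ≤
      (p * (p - 1).factorial * Real.exp K * 6) * ∑ i, |c i| * |t i| := by
  rw [Ex_sum, mul_sum]
  refine sum_le_sum fun i _ => ?_
  have hti := abs_le_of_sum_sq hK ht i
  calc _ ≤ Ex n m (fun y => (|c i| * |t i| * p) * (|dev n m s y i| + K) ^ (p - 1)) := by
        refine Ex_mono fun y _ => ?_
        have h := abs_pow_sub_pow_le (dev n m s y i + t i) (dev n m s y i) p
        rw [add_sub_cancel_left] at h
        have hmax : max |dev n m s y i + t i| |dev n m s y i| ≤ |dev n m s y i| + K :=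
          max_le ((abs_add_le _ _).trans (by linarith)) (by linarith)
        have h2 := pow_le_pow_left₀ (le_max_of_le_right (abs_nonneg _)) hmax (p - 1)
        calc _ ≤ |c i| * (|t i| * p * (|dev n m s y i| + K) ^ (p - 1)) := by
              gcongr
              exact h.trans (by gcongr)
          _ = _ := by ring
    _ ≤ _ := by
        rw [Ex_mul]
        have := Ex_pow_dev hs hN i (p - 1) (T := K) (by linarith)
        calc _ ≤ (|c i| * |t i| * p) * ((p - 1).factorial * Real.exp K * 6) := by gcongr
          _ = _ := by ring

/-- Fluctuation of a weighted power sum with weights summing to zero. -/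
lemma Ex_weighted (p : ℕ) (K : ℝ) (hK : 1 ≤ K) : ∃ C : ℝ, 0 ≤ C ∧
    ∀ (n m : ℕ) (s Q : ℝ) (ω t : Fin n → ℝ), 0 < n → 1 ≤ s → (m : ℝ) / n ≤ s ^ 2 → 0 ≤ Q →
      ∑ i, t i ^ 2 ≤ K → ∑ i, ω i = 0 → ∑ i, ω i ^ 2 ≤ Q ^ 2 →
      Ex n m (fun y => |∑ i, ω i * (dev n m s y i + t i) ^ p|) ≤ C * Q := by
  set B : ℝ := (2 * p).factorial * 6 with hB
  refine ⟨2 * B + 2 + (p * (p - 1).factorial * Real.exp K * 6) * K, by positivity, ?_⟩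
  intro n m s Q ω t hn hs hN hQ ht hω hQ2
  have h1 := Ex_exch (m := m) ω hω (fun z => (((z : ℝ) - (m : ℝ) / n) / s) ^ p) (B := B) (by
    intro i
    have h := Ex_pow_dev hs hN i (2 * p) (T := 0) le_rfl
    rw [Real.exp_zero, mul_one] at h
    refine le_trans (le_of_eq ?_) h
    refine Ex_congr fun y _ => ?_
    rw [add_zero, dev, ← pow_mul, mul_comm p 2, pow_mul, pow_mul, sq_abs])
  have h2 := Ex_abs_sq_le hn m (fun y => ∑ i, ω i * (((y i : ℝ) - (m : ℝ) / n) / s) ^ p)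
  have h3 : Ex n m (fun y => |∑ i, ω i * dev n m s y i ^ p|) ≤ (2 * B + 2) * Q := by
    refine abs_le_of_sq_le_sq' ((h2.trans h1).trans ?_) (by positivity) |>.2
    calc _ ≤ 2 * B * Q ^ 2 := by gcongr
      _ ≤ (2 * B + 2) ^ 2 * Q ^ 2 := by
        gcongr
        have : 0 ≤ B := by positivity
        nlinarith
      _ = _ := by ring
  have h4 := Ex_shift (m := m) hs hN hK ω t ht p
  have h5 := sum_abs_mul_le hK hQ ht hQ2
  calc _ ≤ Ex n m (fun y => |∑ i, ω i * dev n m s y i ^ p| +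
        ∑ i, |ω i| * |(dev n m s y i + t i) ^ p - dev n m s y i ^ p|) := by
        refine Ex_mono fun y _ => ?_
        have : ∑ i, ω i * (dev n m s y i + t i) ^ p = ∑ i, ω i * dev n m s y i ^ p +
            ∑ i, ω i * ((dev n m s y i + t i) ^ p - dev n m s y i ^ p) := by
          rw [← sum_add_distrib]; exact sum_congr rfl fun i _ => by ring
        rw [this]
        refine (abs_add_le _ _).trans (add_le_add_right ((abs_sum_le_sum_abs _ _).trans ?_) _)
        simp_rw [abs_mul]; rfl
    _ ≤ (2 * B + 2) * Q + (p * (p - 1).factorial * Real.exp K * 6) * (Q * K) := by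
        rw [Ex_add]
        exact add_le_add h3 (h4.trans (by gcongr))
    _ = _ := by ring

lemma sum_dev {n m : ℕ} (hn : 0 < n) {y : Fin n → ℕ} (hy : ∑ i, y i = m) :
    ∑ i, ((y i : ℝ) - (m : ℝ) / n) = 0 := by
  have hn' : (n : ℝ) ≠ 0 := by positivity
  have : (∑ i, (y i : ℝ)) = m := by exact_mod_cast hy
  rw [sum_sub_distrib, this]; simp; field_simp; ring

/-- The limiting values of the power sums of normalised deviations, divided by `n`. Only the
degrees `p = 2, 3, 4` are meant; the last branch is the value for `p = 4`. -/
noncomputable def powLim (s : ℝ) (p : ℕ) : ℝ := if p = 2 then 1 else if p = 3 then 1 / s else 3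

/-- Law of large numbers for the power sums of degree `2, 3, 4`, with rate `√n`. -/
lemma Ex_powSum (p : ℕ) (hp : p = 2 ∨ p = 3 ∨ p = 4) (K : ℝ) (hK : 1 ≤ K) : ∃ C : ℝ, 0 ≤ C ∧
    ∀ (n m : ℕ) (s : ℝ) (t : Fin n → ℝ), 0 < n → 1 ≤ s → 8 ≤ m → 1 ≤ (m : ℝ) / n →
      (m : ℝ) / n ≤ s ^ 2 → n * (1 - (m : ℝ) / n / s ^ 2) ≤ K * √n → n / s ^ 2 ≤ K * √n →
      ∑ i, t i ^ 2 ≤ K →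
      Ex n m (fun y => |∑ i, (dev n m s y i + t i) ^ p - n * powLim s p|) ≤ C * √n := by
  set Z : ℝ := 10 ^ 6 * 40 with hZ
  refine ⟨Z + 6 * Z + 13 * Z + 7 * K + (p * (p - 1).factorial * Real.exp K * 6) * K,
    by positivity, ?_⟩
  intro n m s t hn hs hm hN1 hN hθ hns ht
  have hs0 : 0 < s := by linarith
  have hn' : (0 : ℝ) < n := by exact_mod_cast hn
  set N := (m : ℝ) / n with hNdef
  set w := √(n : ℝ) with hw
  have hw0 : 0 ≤ w := Real.sqrt_nonneg _
  set θ := N / s ^ 2 with hθdef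
  have hθ1 : θ ≤ 1 := (div_le_one (by positivity)).2 hN
  have hθ0 : 0 ≤ θ := by positivity
  have hinv : 1 / s ≤ 1 := (div_le_one hs0).2 hs
  have hinv0 : 0 < 1 / s := by positivity
  have hinv2 : 1 / s ^ 2 ≤ 1 := (div_le_one (by positivity)).2 (one_le_pow₀ hs)
  set X : ℕ → (Fin n → ℕ) → ℝ := fun q y => (∑ i, charlier q N (y i)) / s ^ q with hX
  have hXE : ∀ q, q = 2 ∨ q = 3 ∨ q = 4 → Ex n m (fun y => |X q y|) ≤ Z * w :=
    fun q hq => Ex_charlier_sum hn hs hm hN1 hN q hq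
  have hX2 := hXE 2 (by simp)
  have hX3 := hXE 3 (by simp)
  have hX4 := hXE 4 (by simp)
  -- the power sums expressed through Charlier sums
  have hbase : ∀ y : Fin n → ℕ, ∑ i, y i = m →
      |∑ i, dev n m s y i ^ p - n * powLim s p| ≤
        |X 4 y| + 6 * |X 3 y| + 13 * |X 2 y| + 7 * K * w := by
    intro y hy
    have e0 := sum_dev hn hy
    set r : Fin n → ℝ := fun i => (y i : ℝ) - N with hr
    have hcard : (∑ _i : Fin n, (1 : ℝ)) = n := by simp
    have c2 : ∑ i, charlier 2 N (y i) = ∑ i, r i ^ 2 - n * N := by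
      simp_rw [charlier_two]
      rw [sum_sub_distrib, sum_sub_distrib, e0]; simp [hr]
    have c3 : ∑ i, charlier 3 N (y i) = ∑ i, r i ^ 3 - 3 * ∑ i, r i ^ 2 + 2 * n * N := by
      simp_rw [charlier_three]
      rw [sum_add_distrib, sum_add_distrib, sum_sub_distrib, ← mul_sum, ← mul_sum, e0]
      simp [hr]; ring
    have c4 : ∑ i, charlier 4 N (y i) = ∑ i, r i ^ 4 - 6 * ∑ i, r i ^ 3
        + (11 - 6 * N) * ∑ i, r i ^ 2 + n * (3 * N ^ 2 - 6 * N) := by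
      simp_rw [charlier_four]
      rw [sum_add_distrib, sum_add_distrib, sum_add_distrib, sum_sub_distrib, ← mul_sum,
        ← mul_sum, ← mul_sum, e0]
      simp [hr]; ring
    have hd : ∀ q : ℕ, ∑ i, dev n m s y i ^ q = (∑ i, r i ^ q) / s ^ q := by
      intro q
      rw [sum_div]; exact sum_congr rfl fun i _ => by rw [dev, div_pow]
    have a2 := abs_nonneg (X 2 y)
    have a3 := abs_nonneg (X 3 y)
    have a4 := abs_nonneg (X 4 y)
    have b2 := abs_le.1 (le_refl |X 2 y|)
    have b3 := abs_le.1 (le_refl |X 3 y|)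
    have b4 := abs_le.1 (le_refl |X 4 y|)
    have hKw : 0 ≤ K * w := by positivity
    have hN0 : 0 < N := by linarith
    rw [hd]
    rcases hp with rfl | rfl | rfl
    · have e : (∑ i, r i ^ 2) / s ^ 2 - n * powLim s 2 = X 2 y - n * (1 - θ) := by
        simp only [hX, c2, powLim, hθdef]; field_simp; simp; ring
      have : 0 ≤ n * (1 - θ) := mul_nonneg hn'.le (by linarith)
      rw [e, abs_le]; constructor <;> linarith
    · have e : (∑ i, r i ^ 3) / s ^ 3 - n * powLim s 3 =
          X 3 y + 3 * (1 / s * X 2 y) - 1 / s * (n * (1 - θ)) := by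
        simp only [hX, c2, c3, powLim, hθdef]; field_simp; simp; field_simp; ring
      have h1 : 0 ≤ n * (1 - θ) := mul_nonneg hn'.le (by linarith)
      have h2 : 1 / s * (n * (1 - θ)) ≤ K * w := by
        calc _ ≤ 1 * (n * (1 - θ)) := by gcongr
          _ ≤ _ := by linarith
      have h2' : 0 ≤ 1 / s * (n * (1 - θ)) := by positivity
      have h3 : |1 / s * X 2 y| ≤ |X 2 y| := by
        rw [abs_mul, abs_of_pos hinv0]; exact mul_le_of_le_one_left a2 hinv
      rw [abs_le] at h3
      rw [e, abs_le]; constructor <;> linarith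
    · have e : (∑ i, r i ^ 4) / s ^ 4 - n * powLim s 4 =
          X 4 y + 6 * (1 / s * X 3 y) + (7 * (1 / s ^ 2 * X 2 y) + 6 * (θ * X 2 y))
            - 3 * ((1 + θ) * (n * (1 - θ))) + θ * (n / s ^ 2) := by
        simp only [hX, c2, c3, c4, powLim, hθdef]; field_simp; simp; ring
      have h1 : 0 ≤ n * (1 - θ) := mul_nonneg hn'.le (by linarith)
      have h2 : (1 + θ) * (n * (1 - θ)) ≤ 2 * (K * w) := by
        apply mul_le_mul <;> linarith
      have h2' : 0 ≤ (1 + θ) * (n * (1 - θ)) := by positivity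
      have h3 : |1 / s * X 3 y| ≤ |X 3 y| := by
        rw [abs_mul, abs_of_pos hinv0]; exact mul_le_of_le_one_left a3 hinv
      have h4 : |1 / s ^ 2 * X 2 y| ≤ |X 2 y| := by
        rw [abs_mul, abs_of_pos (by positivity)]; exact mul_le_of_le_one_left a2 hinv2
      have h5 : |θ * X 2 y| ≤ |X 2 y| := by
        rw [abs_mul, abs_of_nonneg hθ0]; exact mul_le_of_le_one_left a2 hθ1
      have h6 : θ * (n / s ^ 2) ≤ K * w :=
        (mul_le_of_le_one_left (by positivity) hθ1).trans hns
      have h6' : 0 ≤ θ * (n / s ^ 2) := by positivity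
      rw [abs_le] at h3 h4 h5
      rw [e, abs_le]; constructor <;> linarith
  have h4 := Ex_shift (m := m) hs hN hK (fun _ : Fin n => (1 : ℝ)) t ht p
  have h5 := sum_abs_mul_le (c := fun _ : Fin n => (1 : ℝ)) hK hw0 ht
    (by simp [hw, Real.sq_sqrt hn'.le])
  simp only [abs_one, one_mul] at h4 h5
  calc _ ≤ Ex n m (fun y => (|X 4 y| + (6 * |X 3 y| + (13 * |X 2 y| + 7 * K * w))) +
        ∑ i, |(dev n m s y i + t i) ^ p - dev n m s y i ^ p|) := by
        refine Ex_mono fun y hy => ?_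
        have : ∑ i, (dev n m s y i + t i) ^ p - n * powLim s p =
            (∑ i, dev n m s y i ^ p - n * powLim s p) +
            ∑ i, ((dev n m s y i + t i) ^ p - dev n m s y i ^ p) := by
          rw [sum_sub_distrib]; ring
        rw [this]
        refine (abs_add_le _ _).trans (add_le_add ((hbase y hy).trans (by linarith))
          (abs_sum_le_sum_abs _ _))
    _ ≤ (Z * w + (6 * (Z * w) + (13 * (Z * w) + 7 * K * w))) +
        (p * (p - 1).factorial * Real.exp K * 6) * (w * K) := by
        rw [Ex_add, Ex_add, Ex_add, Ex_add, Ex_mul, Ex_mul, Ex_const hn]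
        refine add_le_add ?_ (h4.trans (by gcongr))
        linarith
    _ = _ := by ring

/-! ### Stirling's expansion -/

lemma log_taylor {x : ℝ} (hx : |x| ≤ 1 / 2) (q : ℕ) :
    |∑ i ∈ range q, x ^ (i + 1) / (i + 1) + Real.log (1 - x)| ≤ 2 * |x| ^ (q + 1) := by
  refine (Real.abs_log_sub_add_sum_range_le (by linarith) q).trans ?_
  rw [div_le_iff₀ (by linarith)]
  nlinarith [pow_nonneg (abs_nonneg x) (q + 1)]

/-- The main terms of Stirling's expansion of `log Γ(x + 1)`, up to an additive constant. -/
noncomputable def stirF (x : ℝ) : ℝ :=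
  (x * Real.log x - x) + 1 / 2 * Real.log x + 1 / 12 * (1 / x)

lemma stirF_diff {x : ℝ} (hx : 2 ≤ x) :
    |stirF x - stirF (x - 1) - Real.log x| ≤ 3 / x ^ 3 := by
  have hx0 : 0 < x := by linarith
  set t := 1 / x with ht
  have ht0 : 0 < t := by positivity
  have ht2 : t ≤ 1 / 2 := by rw [ht]; exact one_div_le_one_div_of_le (by norm_num) hx
  have h := log_taylor (x := t) (by rw [abs_of_pos ht0]; exact ht2) 3
  simp only [sum_range_succ, sum_range_zero] at h
  rw [abs_of_pos ht0] at h
  norm_num at h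
  set e := t + t ^ 2 / 2 + t ^ 3 / 3 + Real.log (1 - t) with he
  have hlog : Real.log (x - 1) = Real.log x + Real.log (1 - t) := by
    rw [← Real.log_mul hx0.ne' (by linarith)]
    congr 1; rw [ht]; field_simp
  have hxt : x * t = 1 := by rw [ht]; field_simp
  have hx1 : 1 / (x - 1) = t / (1 - t) := by
    rw [ht]; have : x - 1 ≠ 0 := by linarith
    field_simp
  have e1 : stirF x - stirF (x - 1) - Real.log x =
      -(x - 1 / 2) * e - t ^ 3 / 6 - t ^ 3 / (12 * (1 - t)) := by
    simp only [stirF, hlog, hx1]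
    have : Real.log (1 - t) = e - (t + t ^ 2 / 2 + t ^ 3 / 3) := by rw [he]; ring
    rw [this]
    have h1t : 1 - t ≠ 0 := by linarith
    have e2 : t / (1 - t) = t + t ^ 2 + t ^ 3 / (1 - t) := by field_simp; ring
    have e3 : t ^ 3 / (12 * (1 - t)) = 1 / 12 * (t ^ 3 / (1 - t)) := by field_simp
    rw [e2, e3, ← ht]
    linear_combination (1 + t / 2 + t ^ 2 / 3) * hxt
  have e4 : 3 / x ^ 3 = 3 * t ^ 3 := by rw [ht]; field_simp
  have h5 : |(x - 1 / 2) * e| ≤ 2 * t ^ 3 := by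
    rw [abs_mul, abs_of_pos (by linarith : 0 < x - 1 / 2)]
    calc _ ≤ x * (2 * t ^ 4) := by gcongr; linarith
      _ = (x * t) * (2 * t ^ 3) := by ring
      _ = _ := by rw [hxt, one_mul]
  have h6 : t ^ 3 / (12 * (1 - t)) ≤ t ^ 3 / 6 := by
    gcongr; linarith
  have h7 : 0 ≤ t ^ 3 / (12 * (1 - t)) := by
    have : 0 ≤ 1 - t := by linarith
    positivity
  have h8 : 0 < t ^ 3 := by positivity
  rw [e1, e4]
  rw [abs_le] at h5 ⊢
  constructor <;> nlinarith

/-- Stirling's formula for a falling factorial, by telescoping `stirF_diff`. -/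
lemma sum_log_stirF {N : ℝ} {a : ℕ} (hN : 4 ≤ N) (ha : (a : ℝ) ≤ N / 2) :
    |∑ j ∈ range a, Real.log (N - j) - (stirF N - stirF (N - a))| ≤ 24 * a / N ^ 3 := by
  have h : stirF N - stirF (N - a) = ∑ j ∈ range a, (stirF (N - j) - stirF (N - j - 1)) := by
    have := sum_range_sub' (fun j : ℕ => stirF (N - j)) a
    simp only [Nat.cast_zero, sub_zero] at this
    rw [← this]
    exact sum_congr rfl fun j _ => by push_cast; rw [sub_sub]
  rw [h, ← sum_sub_distrib]
  refine (abs_sum_le_sum_abs _ _).trans ?_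
  calc _ ≤ ∑ j ∈ range a, 24 / N ^ 3 := by
        refine sum_le_sum fun j hj => ?_
        have hj' : (j : ℝ) ≤ a := by exact_mod_cast (mem_range.1 hj).le
        have hx : N / 2 ≤ N - j := by linarith
        rw [abs_sub_comm]
        refine (stirF_diff (by linarith)).trans ?_
        calc _ ≤ 3 / (N / 2) ^ 3 := by gcongr
          _ = _ := by field_simp; norm_num
    _ = _ := by simp; ring

lemma phi_taylor {t : ℝ} (ht : |t| ≤ 1 / 2) :
    |(1 - t) * Real.log (1 - t) + t - t ^ 2 / 2| ≤ 4 * |t| ^ 3 := by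
  have h := log_taylor ht 2
  simp only [sum_range_succ, sum_range_zero] at h
  norm_num at h
  set e := t + t ^ 2 / 2 + Real.log (1 - t) with he
  have e1 : (1 - t) * Real.log (1 - t) + t - t ^ 2 / 2 = (1 - t) * e + t ^ 3 / 2 := by
    rw [he]; ring
  rw [e1]
  refine (abs_add_le _ _).trans ?_
  rw [abs_mul, abs_div, abs_pow]
  have h1 : |1 - t| ≤ 3 / 2 := by rw [abs_le] at *; constructor <;> linarith
  have : |1 - t| * |e| ≤ 3 / 2 * (2 * |t| ^ 3) := by gcongr
  norm_num
  nlinarith [pow_nonneg (abs_nonneg t) 3]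

lemma neg_log_taylor {t : ℝ} (ht : |t| ≤ 1 / 2) :
    |-Real.log (1 - t) - t - t ^ 2 / 2| ≤ 2 * |t| ^ 3 := by
  have h := log_taylor ht 2
  simp only [sum_range_succ, sum_range_zero] at h
  norm_num at h
  rw [← abs_neg]
  refine le_trans (le_of_eq ?_) h
  congr 1; ring

/-! ### The non-asymptotic form of the regime -/

/-- The non-asymptotic form of the intermediate regime for a single `n`: all error terms are
measured in powers of `η = n ^ (-1/4)`. -/
structure Reg (n m : ℕ) (a : Fin n → ℕ) (K η : ℝ) : Prop where
  hn : 0 < n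
  hK : 1 ≤ K
  hη : 0 < η
  hnη : n * η ^ 4 = 1
  hk : ∑ i, (a i : ℝ) ≤ K * η ^ 2 * m
  hN : n ≤ K * η ^ 2 * m
  hv : ∑ i, ((a i : ℝ) - (∑ j, (a j : ℝ)) / n) ^ 2 ≤ K * ((m : ℝ) / n)
  hsmall : 32 * K ^ 2 * η ≤ 1

namespace Reg
variable {n m : ℕ} {a : Fin n → ℕ} {K η : ℝ}

lemma n_pos (R : Reg n m a K η) : (0 : ℝ) < n := by exact_mod_cast R.hn

lemma m_pos (R : Reg n m a K η) : (0 : ℝ) < m := by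
  have h := R.hN
  have h1 := R.n_pos
  have h2 := R.hK
  have h3 := R.hη
  by_contra hcon
  have : (m : ℝ) = 0 := le_antisymm (not_lt.1 hcon) (Nat.cast_nonneg m)
  rw [this] at h; linarith

lemma N_pos (R : Reg n m a K η) : (0 : ℝ) < (m : ℝ) / n := div_pos R.m_pos R.n_pos

lemma N_ge (R : Reg n m a K η) : 1 ≤ K * η ^ 2 * ((m : ℝ) / n) := by
  rw [← mul_div_assoc, one_le_div R.n_pos]; exact R.hN

lemma inv_N (R : Reg n m a K η) : 1 / ((m : ℝ) / n) ≤ K * η ^ 2 := by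
  rw [div_le_iff₀ R.N_pos]; exact R.N_ge

lemma eta_le (R : Reg n m a K η) : η ≤ 1 / 32 := by
  nlinarith [R.hsmall, R.hη, R.hK, mul_le_mul R.hK R.hK (by norm_num) (by linarith [R.hK])]

lemma Keta_le (R : Reg n m a K η) : K * η ≤ 1 / 32 := by
  nlinarith [R.hsmall, R.hη, R.hK, mul_pos R.hη (by linarith [R.hK] : 0 < K)]

lemma N_large (R : Reg n m a K η) : 1024 ≤ (m : ℝ) / n := by
  have h := R.N_ge
  have h1 := R.N_pos
  have h2 : K * η ^ 2 ≤ 1 / 1024 := by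
    calc K * η ^ 2 = (K * η) * η := by ring
      _ ≤ 1 / 32 * (1 / 32) := by
        exact mul_le_mul R.Keta_le R.eta_le R.hη.le (by norm_num)
      _ = _ := by norm_num
  nlinarith

/-- The mean `u = k / m` of the relative plantings `a i / N` is at most `K η²`. -/
lemma u_le (R : Reg n m a K η) : (∑ i, (a i : ℝ)) / m ≤ K * η ^ 2 := by
  rw [div_le_iff₀ R.m_pos]; exact R.hk

lemma u_nonneg (_R : Reg n m a K η) : 0 ≤ (∑ i, (a i : ℝ)) / m := by positivity

lemma sum_alpha (R : Reg n m a K η) :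
    ∑ i, (a i : ℝ) / ((m : ℝ) / n) = n * ((∑ i, (a i : ℝ)) / m) := by
  rw [← sum_div]; have := R.n_pos; have := R.m_pos; field_simp

lemma sum_alpha_sq (R : Reg n m a K η) :
    ∑ i, ((a i : ℝ) / ((m : ℝ) / n)) ^ 2 = n * ((∑ i, (a i : ℝ)) / m) ^ 2 +
      1 / ((m : ℝ) / n) * ((∑ i, ((a i : ℝ) - (∑ j, (a j : ℝ)) / n) ^ 2) / ((m : ℝ) / n)) := by
  have h1 := R.n_pos
  have h2 := R.m_pos
  have : ∑ i, ((a i : ℝ) - (∑ j, (a j : ℝ)) / n) ^ 2 =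
      ∑ i, (a i : ℝ) ^ 2 - (∑ j, (a j : ℝ)) ^ 2 / n := by
    simp_rw [sub_sq]
    rw [sum_add_distrib, sum_sub_distrib, ← sum_mul, ← mul_sum]
    simp; field_simp; ring
  rw [this]
  simp_rw [div_pow]
  rw [← sum_div]
  field_simp; ring

lemma v_le (R : Reg n m a K η) :
    (∑ i, ((a i : ℝ) - (∑ j, (a j : ℝ)) / n) ^ 2) / ((m : ℝ) / n) ≤ K := by
  rw [div_le_iff₀ R.N_pos]; exact R.hv

lemma v_nonneg (_R : Reg n m a K η) :
    0 ≤ (∑ i, ((a i : ℝ) - (∑ j, (a j : ℝ)) / n) ^ 2) / ((m : ℝ) / n) := by positivity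

lemma nu_sq_le (R : Reg n m a K η) : n * ((∑ i, (a i : ℝ)) / m) ^ 2 ≤ K ^ 2 := by
  calc _ ≤ n * (K * η ^ 2) ^ 2 := by
        have := R.u_nonneg; have := R.u_le; gcongr
    _ = K ^ 2 * (n * η ^ 4) := by ring
    _ = _ := by rw [R.hnη, mul_one]

lemma alpha_sq_le (R : Reg n m a K η) : ∑ i, ((a i : ℝ) / ((m : ℝ) / n)) ^ 2 ≤ 2 * K ^ 2 := by
  rw [R.sum_alpha_sq]
  have h1 := R.nu_sq_le
  have h2 : 1 / ((m : ℝ) / n) * ((∑ i, ((a i : ℝ) - (∑ j, (a j : ℝ)) / n) ^ 2) / ((m : ℝ) / n))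
      ≤ 1 * K := by
    have := R.N_large
    refine mul_le_mul ?_ R.v_le R.v_nonneg (by norm_num)
    rw [div_le_one R.N_pos]; linarith
  nlinarith [R.hK]

lemma b_le (R : Reg n m a K η) (i : Fin n) :
    |(a i : ℝ) - (∑ j, (a j : ℝ)) / n| ≤ K * η * ((m : ℝ) / n) := by
  have h1 : ((a i : ℝ) - (∑ j, (a j : ℝ)) / n) ^ 2 ≤ K * ((m : ℝ) / n) :=
    (single_le_sum (f := fun i => ((a i : ℝ) - (∑ j, (a j : ℝ)) / n) ^ 2)
      (fun j _ => sq_nonneg _) (mem_univ i)).trans R.hv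
  have hN := R.N_pos
  have hK := R.hK
  have hη := R.hη
  refine abs_le_of_sq_le_sq (h1.trans ?_) (by positivity)
  have := R.N_ge
  calc K * ((m : ℝ) / n) = K * ((m : ℝ) / n) * 1 := by ring
    _ ≤ K * ((m : ℝ) / n) * (K * η ^ 2 * ((m : ℝ) / n)) := by gcongr
    _ = _ := by ring

lemma alpha_le (R : Reg n m a K η) (i : Fin n) : (a i : ℝ) / ((m : ℝ) / n) ≤ 2 * K * η := by
  have h1 := (abs_le.1 (R.b_le i)).2
  have hN := R.N_pos
  have hK := R.hK
  have hη := R.hη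
  have h2 : (∑ j, (a j : ℝ)) / n ≤ K * η ^ 2 * ((m : ℝ) / n) := by
    rw [← mul_div_assoc]; have := R.hk; gcongr
  rw [div_le_iff₀ hN]
  have h3 : K * η ^ 2 * ((m : ℝ) / n) ≤ K * η * ((m : ℝ) / n) := by
    have := R.eta_le
    gcongr; nlinarith
  linarith

lemma alpha_le' (R : Reg n m a K η) (i : Fin n) : (a i : ℝ) ≤ (m : ℝ) / n / 16 := by
  have h1 := R.alpha_le i
  have h2 := R.Keta_le
  rw [div_le_iff₀ R.N_pos] at h1
  nlinarith [R.N_pos]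

end Reg

/-! ### The deterministic part of the log-likelihood ratio -/

lemma Reg.mono {n m : ℕ} {a : Fin n → ℕ} {K η : ℝ} (R : Reg n m a K η) (i j l : ℕ) (hi : i ≤ l)
    (hj : 1 ≤ j) : K ^ i * η ^ j ≤ K ^ l * η := by
  have h1 : K ^ i ≤ K ^ l := pow_le_pow_right₀ R.hK hi
  have h2 : η ^ j ≤ η ^ 1 :=
    pow_le_pow_of_le_one R.hη.le (by linarith [R.eta_le]) hj
  rw [pow_one] at h2
  have := R.hK; have := R.hη
  gcongr

/-- The part of the Stirling expansion coming from `x log x - x`. -/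
lemma det_h {n m : ℕ} {a : Fin n → ℕ} {K η : ℝ} (R : Reg n m a K η) {N M k v u : ℝ}
    (hNdef : N = m / n) (hk : k = ∑ i, (a i : ℝ)) (hu : u = k / m) (hM : M = N - k / n)
    (hv : v = (∑ i, ((a i : ℝ) - k / n) ^ 2) / N) :
    |∑ i, ((N * Real.log N - N) - ((N - a i) * Real.log (N - a i) - (N - a i))) -
      ((m * Real.log m - m) - ((m - k) * Real.log (m - k) - (m - k))) + k * Real.log n
      + v / 2| ≤ 17 * (K ^ 4 * η) := by
  have hn := R.n_pos
  have hm := R.m_pos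
  have hN0 : 0 < N := hNdef ▸ R.N_pos
  have hη := R.hη
  have hK := R.hK
  have hu0 : 0 ≤ u := by rw [hu, hk]; exact R.u_nonneg
  have hu1 : u ≤ K * η ^ 2 := by rw [hu, hk]; exact R.u_le
  have hKη := R.Keta_le
  have hu2 : u ≤ 1 / 32 := by nlinarith [R.eta_le]
  have hMu : M = N * (1 - u) := by rw [hM, hu, hNdef]; field_simp
  have hM0 : 0 < M := by rw [hMu]; apply mul_pos hN0; linarith
  have hMN : N ≤ 2 * M := by rw [hMu]; nlinarith
  have hmN : (m : ℝ) = n * N := by rw [hNdef]; field_simp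
  have hmk : (m : ℝ) - k = n * M := by rw [hM, hmN]; field_simp
  have hkn : k = n * N - n * M := by rw [← hmN, ← hmk]; ring
  set b : Fin n → ℝ := fun i => (a i : ℝ) - k / n with hb
  have hbsum : ∑ i, b i = 0 := by
    rw [hb, sum_sub_distrib, ← hk]; simp; field_simp; ring
  have hbb : ∀ i, |b i| ≤ K * η * N := fun i => by
    have := R.b_le i; rw [← hk, ← hNdef] at this; exact this
  set τ : Fin n → ℝ := fun i => b i / M with hτ
  have hτ1 : ∀ i, |τ i| ≤ 2 * K * η := by
    intro i
    rw [hτ, abs_div, abs_of_pos hM0, div_le_iff₀ hM0]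
    refine (hbb i).trans ?_
    have : 0 < K * η := by positivity
    nlinarith
  have hτ2 : ∀ i, |τ i| ≤ 1 / 2 := fun i => (hτ1 i).trans (by linarith)
  have hterm : ∀ i, (N - a i) * Real.log (N - a i) - (N - a i) =
      (M * Real.log M - M) - b i * Real.log M +
        M * ((1 - τ i) * Real.log (1 - τ i) + τ i) := by
    intro i
    have e1 : N - a i = M * (1 - τ i) := by
      have : M * τ i = b i := by simp only [hτ]; field_simp
      rw [mul_sub, this, hM]; simp only [hb]; ring
    have h1 := abs_le.1 (hτ2 i)
    have e2 : b i = M * τ i := by simp only [hτ]; field_simp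
    rw [e1, Real.log_mul hM0.ne' (by linarith), e2]; ring
  have hsum : ∑ i, ((N * Real.log N - N) - ((N - a i) * Real.log (N - a i) - (N - a i))) -
      ((m * Real.log m - m) - ((m - k) * Real.log (m - k) - (m - k))) + k * Real.log n
      = - (M * ∑ i, ((1 - τ i) * Real.log (1 - τ i) + τ i)) := by
    rw [sum_sub_distrib]
    simp_rw [hterm]
    have hb0 : ∑ i, b i * Real.log M = 0 := by rw [← sum_mul, hbsum, zero_mul]
    rw [sum_add_distrib, sum_sub_distrib (fun _ => M * Real.log M - M), hb0, ← mul_sum, hmk, hmN,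
      Real.log_mul hn.ne' hN0.ne', Real.log_mul hn.ne' hM0.ne']
    simp only [sum_const, card_univ, Fintype.card_fin, nsmul_eq_mul]
    rw [hkn]; ring
  rw [hsum]
  have hvK : v ≤ K := by
    have := R.v_le; rw [← hk, ← hNdef] at this; rw [hv]; exact this
  have hv0 : 0 ≤ v := by rw [hv]; positivity
  have hbv : ∑ i, b i ^ 2 = v * N := by rw [hv, div_mul_cancel₀ _ hN0.ne']
  have hτsq : M * ∑ i, τ i ^ 2 = v * (N / M) := by
    simp only [hτ, div_pow]; rw [← sum_div, hbv]; field_simp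
  have hNM : N / M ≤ 2 := by rw [div_le_iff₀ hM0]; exact hMN
  have hNM1 : N / M = 1 + u * (N / M) := by rw [hMu]; have : 1 - u ≠ 0 := by linarith
                                            field_simp; ring
  have e1 : -(M * ∑ i, ((1 - τ i) * Real.log (1 - τ i) + τ i)) + v / 2 =
      -(M * ∑ i, ((1 - τ i) * Real.log (1 - τ i) + τ i - τ i ^ 2 / 2)) - v * (u * (N / M)) / 2 := by
    rw [sum_sub_distrib, ← sum_div]
    have : M * (∑ i, τ i ^ 2) = v * (1 + u * (N / M)) := by rw [hτsq, ← hNM1]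
    linear_combination (-1/2) * this
  rw [e1]
  have h1 : |M * ∑ i, ((1 - τ i) * Real.log (1 - τ i) + τ i - τ i ^ 2 / 2)| ≤ 16 * (K ^ 2 * η) := by
    rw [abs_mul, abs_of_pos hM0]
    calc _ ≤ M * ∑ i, (8 * K * η) * τ i ^ 2 := by
          gcongr
          refine (abs_sum_le_sum_abs _ _).trans (sum_le_sum fun i _ => ?_)
          refine (phi_taylor (hτ2 i)).trans ?_
          rw [← sq_abs (τ i)]
          calc _ = 4 * |τ i| * |τ i| ^ 2 := by ring
            _ ≤ 4 * (2 * K * η) * |τ i| ^ 2 := by gcongr; exact hτ1 i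
            _ = _ := by ring
      _ = 8 * K * η * (v * (N / M)) := by rw [← mul_sum, ← hτsq]; ring
      _ ≤ 8 * K * η * (K * 2) := by gcongr
      _ = _ := by ring
  have h2 : v * (u * (N / M)) ≤ 2 * (K ^ 2 * η ^ 2) := by
    calc _ ≤ K * (K * η ^ 2 * 2) := by gcongr
      _ = _ := by ring
  have h3 : 0 ≤ v * (u * (N / M)) := by positivity
  have m1 := R.mono 2 1 4 (by norm_num) le_rfl
  have m2 := R.mono 2 2 4 (by norm_num) (by norm_num)
  rw [pow_one] at m1
  rw [abs_le] at h1 ⊢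
  constructor <;> linarith

/-- The part of the Stirling expansion coming from `(1/2) log x`, without the factor `1/2`. -/
lemma det_log {n m : ℕ} {a : Fin n → ℕ} {K η : ℝ} (R : Reg n m a K η) {N k u : ℝ}
    (hNdef : N = m / n) (hk : k = ∑ i, (a i : ℝ)) (hu : u = k / m) :
    |∑ i, (Real.log N - Real.log (N - a i)) - (Real.log m - Real.log (m - k))
      - (n * u + n * u ^ 2 / 2)| ≤ 12 * (K ^ 4 * η) := by
  have hn := R.n_pos
  have hm := R.m_pos
  have hN0 : 0 < N := hNdef ▸ R.N_pos
  have hη := R.hη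
  have hK := R.hK
  have hu0 : 0 ≤ u := by rw [hu, hk]; exact R.u_nonneg
  have hu1 : u ≤ K * η ^ 2 := by rw [hu, hk]; exact R.u_le
  have hKη := R.Keta_le
  have hu2 : u ≤ 1 / 32 := by nlinarith [R.eta_le]
  set α : Fin n → ℝ := fun i => (a i : ℝ) / N with hα
  have hα0 : ∀ i, 0 ≤ α i := fun i => by positivity
  have hα1 : ∀ i, α i ≤ 2 * K * η := fun i => by
    have := R.alpha_le i; rwa [← hNdef] at this
  have hα2 : ∀ i, |α i| ≤ 1 / 2 := fun i => by rw [abs_of_nonneg (hα0 i)]; linarith [hα1 i]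
  have hs1 : ∑ i, α i = n * u := by
    have := R.sum_alpha; rwa [← hNdef, ← hk, ← hu] at this
  have hs2 := R.sum_alpha_sq
  have hs3 := R.alpha_sq_le
  have hvK := R.v_le
  have hv0 := R.v_nonneg
  have hiN := R.inv_N
  rw [← hNdef] at hs3 hs2 hvK hv0 hiN
  rw [← hk] at hs2 hvK hv0
  rw [← hu] at hs2
  set v := (∑ i, ((a i : ℝ) - k / n) ^ 2) / N with hv
  have hl1 : ∀ i, Real.log N - Real.log (N - a i) = -Real.log (1 - α i) := by
    intro i
    have h1 := abs_le.1 (hα2 i)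
    have : N - a i = N * (1 - α i) := by simp only [hα]; field_simp
    rw [this, Real.log_mul hN0.ne' (by linarith)]; ring
  have hl2 : Real.log m - Real.log (m - k) = -Real.log (1 - u) := by
    have : (m : ℝ) - k = m * (1 - u) := by rw [hu]; field_simp
    rw [this, Real.log_mul hm.ne' (by linarith)]; ring
  simp_rw [hl1]
  rw [hl2]
  have e1 : ∑ i, -Real.log (1 - α i) - -Real.log (1 - u) - (n * u + n * u ^ 2 / 2) =
      ∑ i, (-Real.log (1 - α i) - α i - α i ^ 2 / 2) + (1 / N * v) / 2 + Real.log (1 - u) := by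
    have e2 : ∑ i, α i ^ 2 / 2 = (n * u ^ 2 + 1 / N * v) / 2 := by rw [← sum_div, hs2]
    rw [sum_sub_distrib, sum_sub_distrib, hs1, e2]; ring
  rw [e1]
  have h1 : |∑ i, (-Real.log (1 - α i) - α i - α i ^ 2 / 2)| ≤ 8 * (K ^ 3 * η) := by
    calc _ ≤ ∑ i, (4 * K * η) * α i ^ 2 := by
          refine (abs_sum_le_sum_abs _ _).trans (sum_le_sum fun i _ => ?_)
          refine (neg_log_taylor (hα2 i)).trans ?_
          rw [abs_of_nonneg (hα0 i)]
          calc _ = 2 * α i * α i ^ 2 := by ring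
            _ ≤ 2 * (2 * K * η) * α i ^ 2 := by gcongr; exact hα1 i
            _ = _ := by ring
      _ ≤ 4 * K * η * (2 * K ^ 2) := by rw [← mul_sum]; gcongr
      _ = _ := by ring
  have h2 : 1 / N * v ≤ K ^ 2 * η ^ 2 := by
    calc _ ≤ K * η ^ 2 * K := by gcongr
      _ = _ := by ring
  have h2' : 0 ≤ 1 / N * v := by positivity
  have h3 := log_taylor (x := u) (by rw [abs_of_nonneg hu0]; linarith) 0
  simp [abs_of_nonneg hu0] at h3
  have m1 := R.mono 3 1 4 (by norm_num) le_rfl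
  have m2 := R.mono 2 2 4 (by norm_num) (by norm_num)
  have m3 := R.mono 1 2 4 (by norm_num) (by norm_num)
  rw [pow_one] at m1 m3
  rw [abs_le] at h1 h3 ⊢
  constructor <;> linarith

/-- The part of the Stirling expansion coming from `1 / (12 x)`, without the factor `1/12`. -/
lemma det_inv {n m : ℕ} {a : Fin n → ℕ} {K η : ℝ} (R : Reg n m a K η) {N k u : ℝ}
    (hNdef : N = m / n) (hk : k = ∑ i, (a i : ℝ)) (hu : u = k / m) :
    |∑ i, (1 / N - 1 / (N - a i)) - (1 / m - 1 / (m - k)) + n * u / N| ≤ 6 * (K ^ 4 * η) := by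
  have hn := R.n_pos
  have hm := R.m_pos
  have hN0 : 0 < N := hNdef ▸ R.N_pos
  have hη := R.hη
  have hK := R.hK
  have hu0 : 0 ≤ u := by rw [hu, hk]; exact R.u_nonneg
  have hu1 : u ≤ K * η ^ 2 := by rw [hu, hk]; exact R.u_le
  have hKη := R.Keta_le
  have hu2 : u ≤ 1 / 32 := by nlinarith [R.eta_le]
  have hm1 : (1 : ℝ) ≤ m := by exact_mod_cast (Nat.cast_pos.1 hm)
  set α : Fin n → ℝ := fun i => (a i : ℝ) / N with hα
  have hα0 : ∀ i, 0 ≤ α i := fun i => by positivity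
  have hα1 : ∀ i, α i ≤ 1 / 2 := fun i => by
    have := R.alpha_le i; rw [← hNdef] at this; simp only [hα]; linarith
  have hs1 : ∑ i, α i = n * u := by
    have := R.sum_alpha; rwa [← hNdef, ← hk, ← hu] at this
  have hs3 := R.alpha_sq_le
  have hiN := R.inv_N
  rw [← hNdef] at hs3 hiN
  have key : ∀ x : ℝ, 0 ≤ x → x ≤ 1 / 2 → |1 - 1 / (1 - x) + x| ≤ 2 * x ^ 2 := by
    intro x h0 h1
    have h2 : 1 - x ≠ 0 := by linarith
    have : 1 - 1 / (1 - x) + x = -(x ^ 2 / (1 - x)) := by field_simp; ring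
    rw [this, abs_neg, abs_of_nonneg (div_nonneg (sq_nonneg _) (by linarith)),
      div_le_iff₀ (by linarith)]
    nlinarith [sq_nonneg x]
  have hl1 : ∀ i, 1 / N - 1 / (N - a i) = 1 / N * (1 - 1 / (1 - α i)) := by
    intro i
    have h1 := hα1 i
    have h2 : 1 - α i ≠ 0 := by linarith
    have : N - a i = N * (1 - α i) := by simp only [hα]; field_simp
    rw [this]; field_simp
  have hl2 : 1 / (m : ℝ) - 1 / (m - k) = 1 / m * (1 - 1 / (1 - u)) := by
    have h2 : 1 - u ≠ 0 := by linarith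
    have : (m : ℝ) - k = m * (1 - u) := by rw [hu]; field_simp
    rw [this]; field_simp
  simp_rw [hl1]
  rw [hl2]
  have e1 : ∑ i, 1 / N * (1 - 1 / (1 - α i)) - 1 / m * (1 - 1 / (1 - u)) + n * u / N =
      1 / N * ∑ i, (1 - 1 / (1 - α i) + α i) - 1 / m * ((1 - 1 / (1 - u) + u) - u) := by
    rw [← mul_sum, sum_add_distrib, hs1]; ring
  rw [e1]
  have h1 : |1 / N * ∑ i, (1 - 1 / (1 - α i) + α i)| ≤ 4 * (K ^ 3 * η ^ 2) := by
    rw [abs_mul, abs_of_pos (by positivity)]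
    calc _ ≤ K * η ^ 2 * ∑ i, 2 * α i ^ 2 := by
          gcongr
          exact (abs_sum_le_sum_abs _ _).trans (sum_le_sum fun i _ => key _ (hα0 i) (hα1 i))
      _ ≤ K * η ^ 2 * (2 * (2 * K ^ 2)) := by rw [← mul_sum]; gcongr
      _ = _ := by ring
  have h2 : |1 / (m : ℝ) * ((1 - 1 / (1 - u) + u) - u)| ≤ 2 * (K * η ^ 2) := by
    have := key u hu0 (by linarith)
    rw [abs_mul, abs_of_pos (by positivity)]
    calc _ ≤ 1 * (2 * (K * η ^ 2)) := by
          gcongr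
          · exact (div_le_one hm).2 hm1
          · rw [abs_le] at this ⊢; constructor <;> nlinarith
      _ = _ := by ring
  have m1 := R.mono 3 2 4 (by norm_num) (by norm_num)
  have m3 := R.mono 1 2 4 (by norm_num) (by norm_num)
  rw [pow_one] at m3
  rw [abs_le] at h1 h2 ⊢
  constructor <;> linarith

/-- The value of the log-likelihood ratio at the flat configuration, where every load is
`N = m / n` (real, so not an actual configuration in general). -/
lemma det_part {n m : ℕ} {a : Fin n → ℕ} {K η : ℝ} (R : Reg n m a K η) {N v u : ℝ}
    (hNdef : N = m / n) (hu : u = (∑ i, (a i : ℝ)) / m)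
    (hv : v = (∑ i, ((a i : ℝ) - (∑ j, (a j : ℝ)) / n) ^ 2) / N) :
    |∑ i, ∑ j ∈ range (a i), Real.log (N - j) - ∑ l ∈ range (∑ i, a i), Real.log (m - l)
      + (∑ i, (a i : ℝ)) * Real.log n - (-(v / 2) + n * u / 2 + n * u ^ 2 / 4 - n * u / N / 12)|
      ≤ 80 * (K ^ 4 * η) := by
  have hn := R.n_pos
  have hm := R.m_pos
  have hN0 : 0 < N := hNdef ▸ R.N_pos
  have hη := R.hη
  have hK := R.hK
  have hNl : 1024 ≤ N := hNdef ▸ R.N_large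
  set k := ∑ i, (a i : ℝ) with hk
  have hkc : ((∑ i, a i : ℕ) : ℝ) = k := by push_cast; rfl
  have hu0 : 0 ≤ u := by rw [hu, hk]; exact R.u_nonneg
  have hu1 : u ≤ K * η ^ 2 := by rw [hu, hk]; exact R.u_le
  have hKη := R.Keta_le
  have hu2 : u ≤ 1 / 32 := by nlinarith [R.eta_le]
  have hkm : k = u * m := by rw [hu]; field_simp
  have hmN : (m : ℝ) = n * N := by rw [hNdef]; field_simp
  have hn1 : (1 : ℝ) ≤ n := by exact_mod_cast R.hn
  have hmN' : N ≤ m := by rw [hmN]; nlinarith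
  have hiN : 1 / N ≤ K * η ^ 2 := by have := R.inv_N; rwa [← hNdef] at this
  have hA := det_h R hNdef hk hu rfl hv
  have hB := det_log R hNdef hk hu
  have hC := det_inv R hNdef hk hu
  have hS1 : |∑ i, (∑ j ∈ range (a i), Real.log (N - j) - (stirF N - stirF (N - a i)))|
      ≤ 24 * (K ^ 3 * η ^ 2) := by
    calc _ ≤ ∑ i, 24 * a i / N ^ 3 := by
          refine (abs_sum_le_sum_abs _ _).trans (sum_le_sum fun i _ => ?_)
          have := R.alpha_le' i
          rw [← hNdef] at this
          exact sum_log_stirF (by linarith) (by linarith)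
      _ = 24 * (n * u * (1 / N) ^ 2) := by
          rw [← sum_div, ← mul_sum, ← hk, hkm, hmN]; field_simp
      _ ≤ 24 * (n * (K * η ^ 2) * (K * η ^ 2) ^ 2) := by gcongr
      _ = 24 * (K ^ 3 * η ^ 2) * (n * η ^ 4) := by ring
      _ = _ := by rw [R.hnη, mul_one]
  have hS2 : |∑ l ∈ range (∑ i, a i), Real.log (m - l) - (stirF m - stirF (m - k))|
      ≤ 24 * (K * η ^ 2) := by
    have := sum_log_stirF (N := m) (a := ∑ i, a i) (by linarith) (by rw [hkc, hkm]; nlinarith)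
    rw [hkc] at this
    refine this.trans ?_
    rw [hkm, div_le_iff₀ (by positivity)]
    have hm1 : (1 : ℝ) ≤ m := by linarith
    have : (m : ℝ) ≤ m ^ 3 := le_self_pow₀ hm1 (by norm_num)
    calc 24 * (u * m) = 24 * u * m := by ring
      _ ≤ 24 * (K * η ^ 2) * m ^ 3 := by gcongr
  rw [sum_sub_distrib] at hS1
  have e : ∑ i, (stirF N - stirF (N - a i)) - (stirF m - stirF (m - k)) =
      (∑ i, ((N * Real.log N - N) - ((N - a i) * Real.log (N - a i) - (N - a i))) -
      ((m * Real.log m - m) - ((m - k) * Real.log (m - k) - (m - k)))) +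
      1 / 2 * (∑ i, (Real.log N - Real.log (N - a i)) - (Real.log m - Real.log (m - k))) +
      1 / 12 * (∑ i, (1 / N - 1 / (N - a i)) - (1 / m - 1 / (m - k))) := by
    have : ∀ i, stirF N - stirF (N - a i) =
      ((N * Real.log N - N) - ((N - a i) * Real.log (N - a i) - (N - a i))) +
        1 / 2 * (Real.log N - Real.log (N - a i)) + 1 / 12 * (1 / N - 1 / (N - a i)) := by
      intro i; simp only [stirF]; ring
    rw [sum_congr rfl fun i _ => this i, sum_add_distrib, sum_add_distrib, ← mul_sum, ← mul_sum]
    simp only [stirF]; ring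
  have m1 := R.mono 3 2 4 (by norm_num) (by norm_num)
  have m3 := R.mono 1 2 4 (by norm_num) (by norm_num)
  rw [pow_one] at m3
  rw [abs_le] at hA hB hC hS1 hS2 ⊢
  constructor <;> linarith

/-! ### The weights of the expansion in powers of the deviations -/

/-- `σ_p(a) = ∑_{j < a} (N / (N - j)) ^ p`, the weights of the powers of `q i` in the expansion of
the log-likelihood ratio. -/
noncomputable def sig (N : ℝ) (p a : ℕ) : ℝ := ∑ j ∈ range a, (N / (N - j)) ^ p

lemma kap_bounds {N x : ℝ} (hN : 0 < N) (hx0 : 0 ≤ x) (hx : x ≤ N / 16) :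
    1 ≤ N / (N - x) ∧ N / (N - x) ≤ 16 / 15 ∧ N / (N - x) - 1 ≤ 16 / 15 * (x / N) := by
  have h1 : 0 < N - x := by linarith
  refine ⟨by rw [le_div_iff₀ h1]; linarith, by rw [div_le_iff₀ h1]; linarith, ?_⟩
  have : N / (N - x) - 1 = x / (N - x) := by field_simp; ring
  rw [this, div_le_iff₀ h1]
  have : 16 / 15 * (x / N) * (N - x) = x * (16 / 15 * ((N - x) / N)) := by ring
  rw [this]
  have h2 : 1 ≤ 16 / 15 * ((N - x) / N) := by
    rw [← mul_div_assoc, le_div_iff₀ hN]; linarith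
  nlinarith

lemma kap_pow {κ y : ℝ} (h1 : 1 ≤ κ) (h2 : κ ≤ 16 / 15) (h3 : κ - 1 ≤ 16 / 15 * y) (p : ℕ)
    (hp : p ≤ 4) : 1 ≤ κ ^ p ∧ κ ^ p ≤ 2 ∧ κ ^ p - 1 ≤ 6 * y := by
  have hy : 0 ≤ y := by linarith
  have hk2 : κ ^ 2 ≤ (16 / 15) ^ 2 := by gcongr
  have hk3 : κ ^ 3 ≤ (16 / 15) ^ 3 := by gcongr
  have hk4 : κ ^ 4 ≤ (16 / 15) ^ 4 := by gcongr
  refine ⟨one_le_pow₀ h1, ?_, ?_⟩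
  · interval_cases p <;> norm_num at * <;> linarith
  · have hd : 0 ≤ κ - 1 := by linarith
    interval_cases p
    · norm_num; linarith
    · norm_num; linarith
    · nlinarith
    · have : κ ^ 3 - 1 = (κ - 1) * (κ ^ 2 + κ + 1) := by ring
      rw [this]
      have : κ ^ 2 + κ + 1 ≤ 4 := by norm_num at hk2; linarith
      nlinarith
    · have : κ ^ 4 - 1 = (κ - 1) * (κ ^ 3 + κ ^ 2 + κ + 1) := by ring
      rw [this]
      have : κ ^ 3 + κ ^ 2 + κ + 1 ≤ 5 := by norm_num at hk2 hk3; linarith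
      nlinarith

lemma kap_two {N x : ℝ} (hN : 0 < N) (hx0 : 0 ≤ x) (hx : x ≤ N / 16) :
    |(N / (N - x)) ^ 2 - 1 - 2 * (x / N)| ≤ 4 * (x / N) ^ 2 := by
  set y := x / N with hy
  have hy0 : 0 ≤ y := by positivity
  have hy1 : y ≤ 1 / 16 := by rw [hy, div_le_iff₀ hN]; linarith
  have h1 : 1 - y ≠ 0 := by linarith
  have e : N / (N - x) = 1 / (1 - y) := by
    have : N - x = N * (1 - y) := by rw [hy]; field_simp
    rw [this]; field_simp
  have e2 : (1 / (1 - y)) ^ 2 - 1 - 2 * y = y ^ 2 * (3 - 2 * y) / (1 - y) ^ 2 := by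
    field_simp; ring
  rw [e, e2, abs_of_nonneg (div_nonneg (mul_nonneg (sq_nonneg _) (by linarith)) (sq_nonneg _)),
    div_le_iff₀ (by positivity)]
  have : 3 - 2 * y ≤ 4 * (1 - y) ^ 2 := by nlinarith
  nlinarith [sq_nonneg y]

lemma sig_le {N : ℝ} (hN : 0 < N) {a : ℕ} (ha : (a : ℝ) ≤ N / 16) {p : ℕ} (hp : p ≤ 4) :
    0 ≤ sig N p a ∧ sig N p a ≤ 2 * a := by
  have key : ∀ j ∈ range a, 1 ≤ (N / (N - j)) ^ p ∧ (N / (N - j)) ^ p ≤ 2 := by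
    intro j hj
    have hj' : (j : ℝ) ≤ a := by exact_mod_cast (mem_range.1 hj).le
    obtain ⟨h1, h2, h3⟩ := kap_bounds hN (Nat.cast_nonneg j) (hj'.trans ha)
    have := kap_pow h1 h2 h3 p hp
    exact ⟨this.1, this.2.1⟩
  refine ⟨sum_nonneg fun j hj => by linarith [(key j hj).1], ?_⟩
  calc _ ≤ ∑ j ∈ range a, (2 : ℝ) := sum_le_sum fun j hj => (key j hj).2
    _ = _ := by simp; ring

lemma sig_sub {N : ℝ} (hN : 0 < N) {a : ℕ} (ha : (a : ℝ) ≤ N / 16) {p : ℕ} (hp : p ≤ 4) :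
    0 ≤ sig N p a - a ∧ sig N p a - a ≤ 6 * (a ^ 2 / N) := by
  have e : sig N p a - a = ∑ j ∈ range a, ((N / (N - j)) ^ p - 1) := by
    rw [sum_sub_distrib, sig]; simp
  have key : ∀ j ∈ range a, 0 ≤ (N / (N - j)) ^ p - 1 ∧ (N / (N - j)) ^ p - 1 ≤ 6 * (a / N) := by
    intro j hj
    have hj' : (j : ℝ) ≤ a := by exact_mod_cast (mem_range.1 hj).le
    obtain ⟨h1, h2, h3⟩ := kap_bounds hN (Nat.cast_nonneg j) (hj'.trans ha)
    have := kap_pow h1 h2 h3 p hp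
    refine ⟨by linarith [this.1], this.2.2.trans (by gcongr)⟩
  rw [e]
  refine ⟨sum_nonneg fun j hj => (key j hj).1, ?_⟩
  calc _ ≤ ∑ j ∈ range a, 6 * ((a : ℝ) / N) := sum_le_sum fun j hj => (key j hj).2
    _ = _ := by simp; ring

lemma sig_two {N : ℝ} (hN : 0 < N) {a : ℕ} (ha : (a : ℝ) ≤ N / 16) :
    |sig N 2 a - a - a * (a - 1) / N| ≤ 4 * (a * (a / N) ^ 2) := by
  have e0 : ∑ j ∈ range a, 2 * ((j : ℝ) / N) = a * (a - 1) / N := by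
    rw [← mul_sum, ← sum_div]
    have := sum_range_id_mul_two a
    have h2 : (∑ j ∈ range a, (j : ℝ)) * 2 = a * (a - 1) := by
      rcases Nat.eq_zero_or_pos a with h | h
      · simp [h]
      · have h1 : (1 : ℕ) ≤ a := h
        have h2 := congrArg (Nat.cast (R := ℝ)) this
        push_cast [Nat.cast_sub h1] at h2
        exact h2
    rw [← h2]; ring
  have e : sig N 2 a - a - a * (a - 1) / N =
      ∑ j ∈ range a, ((N / (N - j)) ^ 2 - 1 - 2 * (j / N)) := by
    rw [sum_sub_distrib, sum_sub_distrib, sig, e0]; simp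
  rw [e]
  refine (abs_sum_le_sum_abs _ _).trans ?_
  calc _ ≤ ∑ j ∈ range a, 4 * ((a : ℝ) / N) ^ 2 := by
        refine sum_le_sum fun j hj => ?_
        have hj' : (j : ℝ) ≤ a := by exact_mod_cast (mem_range.1 hj).le
        refine (kap_two hN (Nat.cast_nonneg j) (hj'.trans ha)).trans (by gcongr)
    _ = _ := by simp; ring

lemma sum_lip {c : ℕ → ℝ} {A : ℝ} {L : ℝ} (hc : ∀ j : ℕ, (j : ℝ) ≤ A → |c j| ≤ L) (a b : ℕ)
    (ha : (a : ℝ) ≤ A) (hb : (b : ℝ) ≤ A) :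
    |∑ j ∈ range a, c j - ∑ j ∈ range b, c j| ≤ L * |(a : ℝ) - b| := by
  wlog hab : b ≤ a generalizing a b
  · rw [abs_sub_comm, abs_sub_comm (a : ℝ)]
    exact this b a hb ha (by omega)
  rw [← sum_Ico_eq_sub _ hab]
  refine (abs_sum_le_sum_abs _ _).trans ?_
  calc _ ≤ ∑ j ∈ Ico b a, L := by
        refine sum_le_sum fun j hj => hc j ?_
        have : (j : ℝ) ≤ a := by exact_mod_cast (mem_Ico.1 hj).2.le
        linarith
    _ = _ := by
        have : (b : ℝ) ≤ a := by exact_mod_cast hab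
        rw [abs_of_nonneg (by linarith)]; simp [Nat.cast_sub hab]; ring

lemma sum_sq_dev {n : ℕ} (hn : 0 < n) (W : Fin n → ℝ) :
    ∑ i, (W i - (∑ j, W j) / n) ^ 2 = (∑ i, ∑ j, (W i - W j) ^ 2) / (2 * n) := by
  have hn' : (n : ℝ) ≠ 0 := by positivity
  have e1 : ∑ i, (W i - (∑ j, W j) / n) ^ 2 = ∑ i, W i ^ 2 - (∑ j, W j) ^ 2 / n := by
    simp_rw [sub_sq]
    rw [sum_add_distrib, sum_sub_distrib, ← sum_mul, ← mul_sum]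
    simp; field_simp; ring
  have e2 : ∑ i, ∑ j, (W i - W j) ^ 2 = 2 * n * ∑ i, W i ^ 2 - 2 * (∑ j, W j) ^ 2 := by
    simp_rw [sub_sq, sum_add_distrib, sum_sub_distrib, ← mul_sum]
    simp_rw [← sum_mul, ← mul_sum]
    simp [← mul_sum]; ring
  rw [e1, e2]; field_simp

/-- An `L`-Lipschitz map increases the empirical variance at most by the factor `L²`. -/
lemma var_lip {n : ℕ} (hn : 0 < n) {W x : Fin n → ℝ} {L : ℝ}
    (h : ∀ i j, |W i - W j| ≤ L * |x i - x j|) :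
    ∑ i, (W i - (∑ j, W j) / n) ^ 2 ≤ L ^ 2 * ∑ i, (x i - (∑ j, x j) / n) ^ 2 := by
  rw [sum_sq_dev hn, sum_sq_dev hn, ← mul_div_assoc]
  gcongr
  rw [mul_sum]
  refine sum_le_sum fun i _ => ?_
  rw [mul_sum]
  refine sum_le_sum fun j _ => ?_
  rw [← sq_abs, ← sq_abs (x i - x j), ← mul_pow]
  exact pow_le_pow_left₀ (abs_nonneg _) (h i j) 2

lemma sig_lip {N A : ℝ} (hN : 0 < N) (hA : A ≤ N / 16) {p : ℕ} (hp : p ≤ 4) (a b : ℕ)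
    (ha : (a : ℝ) ≤ A) (hb : (b : ℝ) ≤ A) : |sig N p a - sig N p b| ≤ 2 * |(a : ℝ) - b| := by
  refine sum_lip (A := A) (fun j hj => ?_) a b ha hb
  obtain ⟨h1, h2, h3⟩ := kap_bounds hN (Nat.cast_nonneg j) (hj.trans hA)
  have := kap_pow h1 h2 h3 p hp
  rw [abs_of_nonneg (by linarith [this.1])]; exact this.2.1

lemma sig_sub_lip {N A : ℝ} (hN : 0 < N) (hA : A ≤ N / 16) {p : ℕ} (hp : p ≤ 4) (a b : ℕ)
    (ha : (a : ℝ) ≤ A) (hb : (b : ℝ) ≤ A) :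
    |(sig N p a - a) - (sig N p b - b)| ≤ 6 * (A / N) * |(a : ℝ) - b| := by
  have e : ∀ a : ℕ, sig N p a - a = ∑ j ∈ range a, ((N / (N - j)) ^ p - 1) := by
    intro a; rw [sum_sub_distrib, sig]; simp
  rw [e, e]
  refine sum_lip (A := A) (fun j hj => ?_) a b ha hb
  obtain ⟨h1, h2, h3⟩ := kap_bounds hN (Nat.cast_nonneg j) (hj.trans hA)
  have := kap_pow h1 h2 h3 p hp
  rw [abs_of_nonneg (by linarith [this.1])]; exact this.2.2.trans (by gcongr)

/-- Fourth-order expansion of `∑_{j<a} log (z - j)` around `N`. -/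
lemma log_expand {N q : ℝ} (hN : 0 < N) (hq : |q| ≤ 1 / 8) {a : ℕ} (ha : (a : ℝ) ≤ N / 16) :
    |∑ j ∈ range a, Real.log (N + N * q - j) - ∑ j ∈ range a, Real.log (N - j)
      - (q * sig N 1 a - q ^ 2 * sig N 2 a / 2 + q ^ 3 * sig N 3 a / 3 - q ^ 4 * sig N 4 a / 4)|
      ≤ 4 * (a * |q| ^ 5) := by
  have key : ∀ j ∈ range a, |Real.log (N + N * q - j) - Real.log (N - j)
      - (q * (N / (N - j)) ^ 1 - q ^ 2 * (N / (N - j)) ^ 2 / 2 + q ^ 3 * (N / (N - j)) ^ 3 / 3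
        - q ^ 4 * (N / (N - j)) ^ 4 / 4)| ≤ 4 * |q| ^ 5 := by
    intro j hj
    have hj' : (j : ℝ) ≤ a := by exact_mod_cast (mem_range.1 hj).le
    obtain ⟨h1, h2, h3⟩ := kap_bounds hN (Nat.cast_nonneg j) (hj'.trans ha)
    have hNj : 0 < N - j := by linarith
    set κ := N / (N - j) with hκ
    have hx : |-(q * κ)| ≤ 1 / 2 := by
      rw [abs_neg, abs_mul, abs_of_pos (by linarith : 0 < κ)]
      nlinarith [abs_nonneg q]
    have hlog : Real.log (N + N * q - j) = Real.log (N - j) + Real.log (1 - -(q * κ)) := by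
      rw [← Real.log_mul hNj.ne' (by have := abs_le.1 hx; linarith)]
      congr 1; rw [hκ]; field_simp; ring
    have h := log_taylor hx 4
    simp only [sum_range_succ, sum_range_zero] at h
    norm_num at h
    rw [abs_of_pos (by linarith : 0 < κ), mul_pow |q|] at h
    have hk5 : κ ^ 5 ≤ 2 := by
      calc κ ^ 5 ≤ (16 / 15) ^ 5 := by gcongr
        _ ≤ 2 := by norm_num
    rw [hlog]
    calc _ ≤ 2 * (|q| ^ 5 * κ ^ 5) := by
          refine le_trans (le_of_eq ?_) h
          congr 1; norm_num; ring
      _ ≤ 2 * (|q| ^ 5 * 2) := by gcongr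
      _ = _ := by ring
  have e : ∑ j ∈ range a, Real.log (N + N * q - j) - ∑ j ∈ range a, Real.log (N - j)
      - (q * sig N 1 a - q ^ 2 * sig N 2 a / 2 + q ^ 3 * sig N 3 a / 3 - q ^ 4 * sig N 4 a / 4) =
      ∑ j ∈ range a, (Real.log (N + N * q - j) - Real.log (N - j)
      - (q * (N / (N - j)) ^ 1 - q ^ 2 * (N / (N - j)) ^ 2 / 2 + q ^ 3 * (N / (N - j)) ^ 3 / 3
        - q ^ 4 * (N / (N - j)) ^ 4 / 4)) := by
    simp only [sum_sub_distrib, sum_add_distrib, sig, ← mul_sum, ← sum_div]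
  rw [e]
  refine (abs_sum_le_sum_abs _ _).trans ((sum_le_sum key).trans (le_of_eq ?_))
  simp; ring

/-! ### The sampling model and the size of each term of the expansion -/

/-- The common description of the two sampling models: after throwing `m'` balls uniformly, the
centred and scaled load of bin `i` is `dev n m' s y i + t i`, where `s = √(m / n)`. For `ST` take
`m' = m` and `t = 0`; for `PL_A` take `m' = m - k` and `t i = (a i - k / n) / s`. -/
structure Model (n m : ℕ) (K : ℝ) (m' : ℕ) (t : Fin n → ℝ) : Prop where
  ht : ∑ i, t i ^ 2 ≤ K
  ht0 : ∑ i, t i = 0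
  hm8 : 8 ≤ m'
  hm1 : 1 ≤ (m' : ℝ) / n
  hle : (m' : ℝ) / n ≤ (m : ℝ) / n
  hclose : n * (1 - (m' : ℝ) / n / ((m : ℝ) / n)) ≤ K * √n

/-- The relative deviations `q i` of the loads in the sampling model. -/
noncomputable def qm (n m m' : ℕ) (t : Fin n → ℝ) (y : Fin n → ℕ) (i : Fin n) : ℝ :=
  (dev n m' (√((m : ℝ) / n)) y i + t i) / √((m : ℝ) / n)

section
variable {n m m' : ℕ} {a : Fin n → ℕ} {K η : ℝ} {t : Fin n → ℝ}

lemma Reg.s_sq (R : Reg n m a K η) : √((m : ℝ) / n) ^ 2 = (m : ℝ) / n := Real.sq_sqrt R.N_pos.le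

lemma Reg.one_le_s (R : Reg n m a K η) : 1 ≤ √((m : ℝ) / n) := by
  rw [Real.one_le_sqrt]; linarith [R.N_large]

lemma Reg.inv_s (R : Reg n m a K η) : 1 / √((m : ℝ) / n) ≤ K * η := by
  have hs := R.one_le_s
  have hη := R.hη
  have hK := R.hK
  refine abs_le_of_sq_le_sq' ?_ (by positivity) |>.2
  rw [div_pow, R.s_sq, one_pow]
  refine R.inv_N.trans ?_
  rw [mul_pow]; gcongr; nlinarith

lemma Reg.sqrt_n (R : Reg n m a K η) : √(n : ℝ) * η ^ 2 = 1 := by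
  have h : (√(n : ℝ) * η ^ 2) ^ 2 = 1 ^ 2 := by
    rw [mul_pow, Real.sq_sqrt R.n_pos.le, ← pow_mul, one_pow]; exact R.hnη
  have h0 : 0 ≤ √(n : ℝ) * η ^ 2 := by positivity
  exact (pow_left_inj₀ h0 zero_le_one two_ne_zero).1 h

lemma Reg.n_div (R : Reg n m a K η) : n / ((m : ℝ) / n) ≤ K * √n := by
  have h1 := R.inv_N
  have h2 := R.sqrt_n
  have hn := R.n_pos
  have h3 : (n : ℝ) = √n * √n := (Real.mul_self_sqrt hn.le).symm
  calc (n : ℝ) / ((m : ℝ) / n) = n * (1 / ((m : ℝ) / n)) := by ring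
    _ ≤ n * (K * η ^ 2) := by gcongr
    _ = K * √n * (√n * η ^ 2) := by nth_rewrite 1 [h3]; ring
    _ = _ := by rw [h2, mul_one]

end

/-- Weighted power sums of the relative deviations concentrate. -/
lemma term_gen (p : ℕ) (hp : p = 2 ∨ p = 3 ∨ p = 4) (K : ℝ) (hK : 1 ≤ K) : ∃ C : ℝ, 0 ≤ C ∧
    ∀ (n m : ℕ) (a : Fin n → ℕ) (η : ℝ) (m' : ℕ) (t : Fin n → ℝ) (W : Fin n → ℝ) (Q : ℝ),
      Reg n m a K η → Model n m K m' t → 0 ≤ Q →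
      ∑ i, (W i - (∑ j, W j) / n) ^ 2 ≤ Q ^ 2 →
      Ex n m' (fun y => |∑ i, W i * qm n m m' t y i ^ p -
        (∑ i, W i) * (powLim (√((m : ℝ) / n)) p / √((m : ℝ) / n) ^ p)|) ≤
      C * ((Q + |∑ i, W i| * η ^ 2) / √((m : ℝ) / n) ^ p) := by
  obtain ⟨C1, hC1, H1⟩ := Ex_weighted p K hK
  obtain ⟨C2, hC2, H2⟩ := Ex_powSum p hp K hK
  refine ⟨C1 + C2, by positivity, ?_⟩
  intro n m a η m' t W Q R M hQ hW
  have hn := R.n_pos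
  set s := √((m : ℝ) / n) with hs
  have hs1 : 1 ≤ s := R.one_le_s
  have hs2 : s ^ 2 = (m : ℝ) / n := R.s_sq
  have hs0 : 0 < s := by linarith
  have hle : (m' : ℝ) / n ≤ s ^ 2 := by rw [hs2]; exact M.hle
  set Wb := (∑ j, W j) / n with hWb
  have hω : ∑ i, (W i - Wb) = 0 := by
    rw [sum_sub_distrib, hWb]; simp; field_simp; ring
  have A1 := H1 n m' s Q (fun i => W i - Wb) t R.hn hs1 hle hQ M.ht hω hW
  have A2 := H2 n m' s t R.hn hs1 M.hm8 M.hm1 hle (by rw [hs2]; exact M.hclose)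
    (by rw [hs2]; exact R.n_div) M.ht
  set g : (Fin n → ℕ) → Fin n → ℝ := fun y i => dev n m' s y i + t i with hg
  have hsn : √(n : ℝ) = n * η ^ 2 := by
    have h2 := R.sqrt_n
    have h3 : √(n : ℝ) * √n = n := Real.mul_self_sqrt hn.le
    calc √(n : ℝ) = √n * (√n * η ^ 2) := by rw [h2, mul_one]
      _ = _ := by rw [← mul_assoc, h3]
  have hWW : |Wb| * √n = |∑ i, W i| * η ^ 2 := by
    rw [hWb, abs_div, abs_of_pos hn, hsn]; field_simp
  calc _ ≤ Ex n m' (fun y => (1 / s ^ p) * (|∑ i, (W i - Wb) * g y i ^ p| +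
        |Wb| * |∑ i, g y i ^ p - n * powLim s p|)) := by
        refine Ex_mono fun y _ => ?_
        have e : ∑ i, W i * qm n m m' t y i ^ p - (∑ i, W i) * (powLim s p / s ^ p) =
            (1 / s ^ p) * (∑ i, (W i - Wb) * g y i ^ p +
              Wb * (∑ i, g y i ^ p - n * powLim s p)) := by
          have e1 : ∑ i, W i * qm n m m' t y i ^ p = (1 / s ^ p) * ∑ i, W i * g y i ^ p := by
            rw [mul_sum]; refine sum_congr rfl fun i _ => ?_
            rw [qm, div_pow]; simp only [hg, hs]; ring
          have e2 : ∑ i, (W i - Wb) * g y i ^ p = ∑ i, W i * g y i ^ p - Wb * ∑ i, g y i ^ p := by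
            rw [mul_sum, ← sum_sub_distrib]; exact sum_congr rfl fun i _ => by ring
          have e3 : ∑ i, W i = Wb * n := by rw [hWb]; field_simp
          rw [e1, e2, e3]; ring
        rw [e, abs_mul, abs_of_pos (by positivity : 0 < 1 / s ^ p)]
        gcongr
        refine (abs_add_le _ _).trans (le_of_eq ?_)
        rw [abs_mul Wb]
    _ ≤ (1 / s ^ p) * (C1 * Q + |Wb| * (C2 * √n)) := by
        rw [Ex_mul, Ex_add, Ex_mul]
        gcongr
    _ = (C1 * Q + C2 * (|∑ i, W i| * η ^ 2)) / s ^ p := by rw [← hWW]; ring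
    _ ≤ ((C1 + C2) * (Q + |∑ i, W i| * η ^ 2)) / s ^ p := by
        gcongr
        have : 0 ≤ |∑ i, W i| * η ^ 2 := by positivity
        nlinarith [mul_nonneg hC2 hQ, mul_nonneg hC1 this]
    _ = _ := by ring

section
variable {n m m' : ℕ} {a : Fin n → ℕ} {K η : ℝ} {t : Fin n → ℝ}

lemma Reg.sum_sig_sub (R : Reg n m a K η) {p : ℕ} (hp : p ≤ 4) :
    |∑ i, (sig ((m : ℝ) / n) p (a i) - a i)| ≤ 12 * K ^ 2 * ((m : ℝ) / n) := by
  have hN := R.N_pos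
  have h : ∀ i, _ := fun i => sig_sub hN (R.alpha_le' i) hp
  rw [abs_of_nonneg (sum_nonneg fun i _ => (h i).1)]
  calc _ ≤ ∑ i, 6 * ((a i : ℝ) ^ 2 / ((m : ℝ) / n)) := sum_le_sum fun i _ => (h i).2
    _ = 6 * ((m : ℝ) / n) * ∑ i, ((a i : ℝ) / ((m : ℝ) / n)) ^ 2 := by
        rw [mul_sum]; refine sum_congr rfl fun i _ => ?_
        rw [div_pow]; field_simp
    _ ≤ 6 * ((m : ℝ) / n) * (2 * K ^ 2) := by gcongr; exact R.alpha_sq_le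
    _ = _ := by ring

lemma Reg.sum_sig (R : Reg n m a K η) {p : ℕ} (hp : p ≤ 4) :
    |∑ i, sig ((m : ℝ) / n) p (a i)| * η ^ 2 ≤ 2 * K * ((m : ℝ) / n) := by
  have hN := R.N_pos
  have h : ∀ i, _ := fun i => sig_le hN (R.alpha_le' i) hp
  rw [abs_of_nonneg (sum_nonneg fun i _ => (h i).1)]
  have hn := R.n_pos
  have hk := R.hk
  have hη := R.hη
  calc _ ≤ (∑ i, 2 * (a i : ℝ)) * η ^ 2 := by gcongr with i _; exact (h i).2
    _ ≤ 2 * (K * η ^ 2 * m) * η ^ 2 := by rw [← mul_sum]; gcongr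
    _ = 2 * K * ((m : ℝ) / n) * (n * η ^ 4) := by field_simp
    _ = _ := by rw [R.hnη, mul_one]

lemma Reg.var_sig_sub (R : Reg n m a K η) {p : ℕ} (hp : p ≤ 4) :
    ∑ i, ((sig ((m : ℝ) / n) p (a i) - a i) -
      (∑ j, (sig ((m : ℝ) / n) p (a j) - a j)) / n) ^ 2 ≤
      (12 * K ^ 2 * η * √((m : ℝ) / n)) ^ 2 := by
  have hN := R.N_pos
  have hη := R.hη
  have hK := R.hK
  have hA : ∀ i, (a i : ℝ) ≤ 2 * K * η * ((m : ℝ) / n) := fun i => by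
    have := R.alpha_le i; rwa [div_le_iff₀ hN] at this
  refine (var_lip R.hn (x := fun i => (a i : ℝ)) (L := 12 * K * η) fun i j => ?_).trans ?_
  · have := sig_sub_lip hN (A := 2 * K * η * ((m : ℝ) / n))
      (by nlinarith [R.Keta_le]) hp (a i) (a j) (hA i) (hA j)
    refine this.trans (le_of_eq ?_)
    rw [mul_div_cancel_right₀ _ hN.ne']; ring
  · calc _ ≤ (12 * K * η) ^ 2 * (K * ((m : ℝ) / n)) := by gcongr; exact R.hv
      _ ≤ (12 * K * η) ^ 2 * (K ^ 2 * ((m : ℝ) / n)) := by gcongr; nlinarith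
      _ = _ := by rw [mul_pow _ (√((m : ℝ) / n)), R.s_sq]; ring

lemma Reg.var_sig (R : Reg n m a K η) {p : ℕ} (hp : p ≤ 4) :
    ∑ i, (sig ((m : ℝ) / n) p (a i) - (∑ j, sig ((m : ℝ) / n) p (a j)) / n) ^ 2 ≤
      (2 * K * √((m : ℝ) / n)) ^ 2 := by
  have hN := R.N_pos
  have hK := R.hK
  refine (var_lip R.hn (x := fun i => (a i : ℝ)) (L := 2) fun i j =>
    sig_lip hN le_rfl hp (a i) (a j) (R.alpha_le' i) (R.alpha_le' j)).trans ?_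
  calc _ ≤ 2 ^ 2 * (K * ((m : ℝ) / n)) := by gcongr; exact R.hv
      _ ≤ 2 ^ 2 * (K ^ 2 * ((m : ℝ) / n)) := by gcongr; nlinarith
      _ = _ := by rw [mul_pow _ (√((m : ℝ) / n)), R.s_sq]; ring

end

/-- Correction to the linear term. Since the `q i` sum to zero, only the deviations of the weights
from their mean contribute. -/
lemma term_one (K : ℝ) (hK : 1 ≤ K) : ∃ C : ℝ, 0 ≤ C ∧
    ∀ (n m : ℕ) (a : Fin n → ℕ) (η : ℝ) (m' : ℕ) (t : Fin n → ℝ),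
      Reg n m a K η → Model n m K m' t →
      Ex n m' (fun y => |∑ i, (sig ((m : ℝ) / n) 1 (a i) - a i) * qm n m m' t y i|) ≤ C * η := by
  obtain ⟨C1, hC1, H1⟩ := Ex_weighted 1 K hK
  refine ⟨C1 * (12 * K ^ 2), by positivity, ?_⟩
  intro n m a η m' t R M
  have hn := R.n_pos
  have hη := R.hη
  set s := √((m : ℝ) / n) with hs
  have hs1 : 1 ≤ s := R.one_le_s
  have hs2 : s ^ 2 = (m : ℝ) / n := R.s_sq
  have hs0 : 0 < s := by linarith
  have hle : (m' : ℝ) / n ≤ s ^ 2 := by rw [hs2]; exact M.hle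
  set W : Fin n → ℝ := fun i => sig ((m : ℝ) / n) 1 (a i) - a i with hWdef
  set Wb := (∑ j, W j) / n with hWb
  have hω : ∑ i, (W i - Wb) = 0 := by
    rw [sum_sub_distrib, hWb]; simp; field_simp; ring
  have A1 := H1 n m' s (12 * K ^ 2 * η * s) (fun i => W i - Wb) t R.hn hs1 hle (by positivity)
    M.ht hω (R.var_sig_sub (p := 1) (by norm_num))
  calc _ = Ex n m' (fun y => (1 / s) * |∑ i, (W i - Wb) * (dev n m' s y i + t i) ^ 1|) := by
        refine Ex_congr fun y hy => ?_
        have h0 : ∑ i, (dev n m' s y i + t i) = 0 := by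
          rw [sum_add_distrib, M.ht0, add_zero]
          simp only [dev]; rw [← sum_div, sum_dev R.hn hy, zero_div]
        have e1 : ∑ i, (W i - Wb) * (dev n m' s y i + t i) ^ 1 =
            ∑ i, W i * (dev n m' s y i + t i) := by
          simp only [sub_mul, pow_one]; rw [sum_sub_distrib, ← mul_sum, h0, mul_zero, sub_zero]
        have e2 : ∑ i, W i * qm n m m' t y i = (1 / s) * ∑ i, W i * (dev n m' s y i + t i) := by
          rw [mul_sum]; refine sum_congr rfl fun i _ => ?_
          rw [qm]; simp only [hs]; ring
        rw [e1, e2, abs_mul, abs_of_pos (by positivity : 0 < 1 / s)]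
    _ ≤ (1 / s) * (C1 * (12 * K ^ 2 * η * s)) := by rw [Ex_mul]; gcongr
    _ = _ := by field_simp

/-- Concentration of the correction to the quadratic term. -/
lemma term_two (K : ℝ) (hK : 1 ≤ K) : ∃ C : ℝ, 0 ≤ C ∧
    ∀ (n m : ℕ) (a : Fin n → ℕ) (η : ℝ) (m' : ℕ) (t : Fin n → ℝ),
      Reg n m a K η → Model n m K m' t →
      Ex n m' (fun y => |∑ i, (sig ((m : ℝ) / n) 2 (a i) - a i) * qm n m m' t y i ^ 2 -
        (∑ i, (sig ((m : ℝ) / n) 2 (a i) - a i)) * (1 / ((m : ℝ) / n))|) ≤ C * η := by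
  obtain ⟨C, hC, H⟩ := term_gen 2 (by simp) K hK
  refine ⟨C * (24 * K ^ 2), by positivity, ?_⟩
  intro n m a η m' t R M
  have hη := R.hη
  have hN := R.N_pos
  have hs := R.one_le_s
  have h := H n m a η m' t _ (12 * K ^ 2 * η * √((m : ℝ) / n)) R M (by positivity)
    (R.var_sig_sub (p := 2) (by norm_num))
  rw [R.s_sq, powLim, if_pos rfl] at h
  refine h.trans ?_
  rw [mul_assoc C]
  refine mul_le_mul_of_nonneg_left ?_ hC
  rw [div_le_iff₀ hN]
  have h1 := R.sum_sig_sub (p := 2) (by norm_num)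
  have h2 : √((m : ℝ) / n) ≤ (m : ℝ) / n := by nlinarith [R.s_sq]
  have h3 : η ^ 2 ≤ η := by nlinarith [R.eta_le]
  calc _ ≤ 12 * K ^ 2 * η * ((m : ℝ) / n) + 12 * K ^ 2 * ((m : ℝ) / n) * η := by gcongr
    _ = _ := by ring

/-- Concentration of the terms of order three and four around their mean values. -/
lemma term_high (p : ℕ) (hp : p = 3 ∨ p = 4) (K : ℝ) (hK : 1 ≤ K) : ∃ C : ℝ, 0 ≤ C ∧
    ∀ (n m : ℕ) (a : Fin n → ℕ) (η : ℝ) (m' : ℕ) (t : Fin n → ℝ),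
      Reg n m a K η → Model n m K m' t →
      Ex n m' (fun y => |∑ i, sig ((m : ℝ) / n) p (a i) * qm n m m' t y i ^ p -
        (∑ i, sig ((m : ℝ) / n) p (a i)) *
          ((if p = 3 then 1 else 3) * (1 / ((m : ℝ) / n)) ^ 2)|) ≤ C * η := by
  obtain ⟨C, hC, H⟩ := term_gen p (by tauto) K hK
  refine ⟨C * (4 * K ^ 2), by positivity, ?_⟩
  intro n m a η m' t R M
  have hη := R.hη
  have hN := R.N_pos
  have hs := R.one_le_s
  have h := H n m a η m' t _ (2 * K * √((m : ℝ) / n)) R M (by positivity)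
    (R.var_sig (p := p) (by omega))
  have h1 := R.sum_sig (p := p) (by omega)
  have hsq := R.s_sq
  have hinv := R.inv_s
  set s := √((m : ℝ) / n) with hsdef
  have hs0 : 0 < s := by linarith
  have e : powLim s p / s ^ p = (if p = 3 then 1 else 3) * (1 / ((m : ℝ) / n)) ^ 2 := by
    rw [← hsq]
    rcases hp with rfl | rfl
    · simp [powLim]; field_simp
    · simp [powLim]; field_simp
  rw [e] at h
  refine h.trans ?_
  rw [mul_assoc C]
  refine mul_le_mul_of_nonneg_left ?_ hC
  have hp3 : s ^ 3 ≤ s ^ p := pow_le_pow_right₀ hs (by omega)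
  have h1 : |∑ i, sig ((m : ℝ) / n) p (a i)| * η ^ 2 ≤ 2 * K * s ^ 2 := by rwa [hsq]
  calc _ ≤ (2 * K * s + 2 * K * s ^ 2) / s ^ 3 := by gcongr
    _ ≤ (2 * K * s ^ 2 + 2 * K * s ^ 2) / s ^ 3 := by gcongr; nlinarith
    _ = 4 * K * (1 / s) := by field_simp; ring
    _ ≤ 4 * K * (K * η) := by gcongr
    _ = _ := by ring

/-- Expected size of the remainder terms: the fifth-order Taylor error, and the sum of sixth
powers which controls the event that some bin deviates by a constant factor. -/
lemma term_rem (K : ℝ) (hK : 1 ≤ K) : ∃ C : ℝ, 0 ≤ C ∧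
    ∀ (n m : ℕ) (a : Fin n → ℕ) (η : ℝ) (m' : ℕ) (t : Fin n → ℝ),
      Reg n m a K η → Model n m K m' t →
      Ex n m' (fun y => ∑ i, (a i : ℝ) * |qm n m m' t y i| ^ 5) ≤ C * η ∧
      Ex n m' (fun y => ∑ i, |qm n m m' t y i| ^ 6) ≤ C * η := by
  set F : ℝ := Nat.factorial 6 * Real.exp K * 6 with hF
  refine ⟨F * K ^ 6, by positivity, ?_⟩
  intro n m a η m' t R M
  have hη := R.hη
  have hN := R.N_pos
  have hs := R.one_le_s
  have hsq := R.s_sq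
  have hinv := R.inv_s
  have hle := M.hle
  rw [← hsq] at hle
  have hn := R.n_pos
  have key : ∀ p, p ≤ 6 → ∀ i, Ex n m' (fun y => |qm n m m' t y i| ^ p) ≤
      F * (1 / √((m : ℝ) / n)) ^ p := by
    intro p hp i
    have h := Ex_pow_dev hs hle i p (T := K) (by linarith)
    set s := √((m : ℝ) / n) with hsdef
    have hs0 : 0 < s := by linarith
    calc _ ≤ Ex n m' (fun y => (1 / s) ^ p * (|dev n m' s y i| + K) ^ p) := by
          refine Ex_mono fun y _ => ?_
          rw [qm, abs_div, abs_of_pos hs0, ← mul_pow]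
          gcongr
          rw [div_eq_mul_one_div, mul_comm]
          gcongr
          exact (abs_add_le _ _).trans (by linarith [abs_le_of_sum_sq hK M.ht i])
      _ ≤ (1 / s) ^ p * (p.factorial * Real.exp K * 6) := by rw [Ex_mul]; gcongr
      _ ≤ (1 / s) ^ p * F := by
          rw [hF]; gcongr
      _ = _ := by ring
  have hk := R.hk
  have hsN : (1 / √((m : ℝ) / n)) ^ 2 = 1 / ((m : ℝ) / n) := by rw [div_pow, hsq, one_pow]
  have hmn : (m : ℝ) = n * ((m : ℝ) / n) := by field_simp
  set ρ := 1 / √((m : ℝ) / n) with hρ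
  have hρ0 : 0 ≤ ρ := by positivity
  constructor
  · rw [Ex_sum]
    calc _ ≤ ∑ i, (a i : ℝ) * (F * ρ ^ 5) := by
          refine sum_le_sum fun i _ => ?_
          rw [Ex_mul]; gcongr; exact key 5 (by norm_num) i
      _ = (∑ i, (a i : ℝ)) * (F * ρ ^ 5) := by rw [sum_mul]
      _ ≤ (K * η ^ 2 * m) * (F * ρ ^ 5) := by gcongr
      _ = F * K * η ^ 2 * n * ρ ^ 3 * (((m : ℝ) / n) * ρ ^ 2) := by
          nth_rewrite 1 [hmn]; ring
      _ = F * K * η ^ 2 * n * ρ ^ 3 := by rw [hsN, mul_one_div_cancel hN.ne', mul_one]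
      _ ≤ F * K * η ^ 2 * n * (K * η) ^ 3 := by gcongr
      _ = F * K ^ 4 * η * (n * η ^ 4) := by ring
      _ ≤ F * K ^ 6 * η := by
          rw [R.hnη, mul_one]; gcongr
          norm_num
  · rw [Ex_sum]
    calc _ ≤ ∑ i : Fin n, (F * ρ ^ 6) := sum_le_sum fun i _ => key 6 le_rfl i
      _ = n * (F * ρ ^ 6) := by simp
      _ ≤ n * (F * (K * η) ^ 6) := by gcongr
      _ = F * K ^ 6 * η ^ 2 * (n * η ^ 4) := by ring
      _ ≤ F * K ^ 6 * η := by
          rw [R.hnη, mul_one]; gcongr; nlinarith [R.eta_le]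

/-! ### The log-likelihood ratio versus `I_A - μ_I` -/

/-- The deterministic centring of the second, third and fourth order terms. -/
lemma det_vals {n m : ℕ} {a : Fin n → ℕ} {K η : ℝ} (R : Reg n m a K η) {N u : ℝ}
    (hNdef : N = m / n) (hu : u = (∑ i, (a i : ℝ)) / m) :
    |-(1 / 2) * ((∑ i, (sig N 2 (a i) - a i)) * (1 / N))
      + 1 / 3 * ((∑ i, sig N 3 (a i)) * (1 * (1 / N) ^ 2))
      - 1 / 4 * ((∑ i, sig N 4 (a i)) * (3 * (1 / N) ^ 2))
      + (n * u ^ 2 / 2 - n * u / N / 12)| ≤ 30 * (K ^ 4 * η) := by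
  have hN0 : 0 < N := hNdef ▸ R.N_pos
  have hη := R.hη
  have hK := R.hK
  have hs1 := R.sum_alpha
  have hs2 := R.sum_alpha_sq
  have hs3 := R.alpha_sq_le
  have hvK := R.v_le
  have hv0 := R.v_nonneg
  have hiN := R.inv_N
  have hal := R.alpha_le
  have hal' := R.alpha_le'
  rw [← hNdef] at hs3 hs2 hvK hv0 hiN hs1
  simp only [← hNdef] at hal hal'
  rw [← hu] at hs2 hs1
  set v := (∑ i, ((a i : ℝ) - (∑ j, (a j : ℝ)) / n) ^ 2) / N with hv
  have hcube : ∑ i, 4 * ((a i : ℝ) * (a i / N) ^ 2) * (1 / N) ≤ 16 * (K ^ 3 * η) := by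
    calc _ ≤ ∑ i, 8 * K * η * ((a i : ℝ) / N) ^ 2 := by
          refine sum_le_sum fun i _ => ?_
          calc _ = 4 * ((a i : ℝ) / N) * ((a i : ℝ) / N) ^ 2 := by ring
            _ ≤ 4 * (2 * K * η) * ((a i : ℝ) / N) ^ 2 := by gcongr; exact hal i
            _ = _ := by ring
      _ ≤ 8 * K * η * (2 * K ^ 2) := by rw [← mul_sum]; gcongr
      _ = _ := by ring
  have h2 : |(∑ i, (sig N 2 (a i) - a i)) * (1 / N) - (n * u ^ 2 + 1 / N * v - n * u / N)|
      ≤ 16 * (K ^ 3 * η) := by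
    have e : (∑ i, (sig N 2 (a i) - a i)) * (1 / N) - (n * u ^ 2 + 1 / N * v - n * u / N) =
        ∑ i, (sig N 2 (a i) - a i - a i * (a i - 1) / N) * (1 / N) := by
      have e1 : ∑ i, ((a i : ℝ) * (a i - 1) / N) * (1 / N) =
          n * u ^ 2 + 1 / N * v - n * u / N := by
        rw [← hs2, ← hs1, sum_div, ← sum_sub_distrib]
        refine sum_congr rfl fun i _ => ?_
        field_simp
      rw [← e1, sum_mul, ← sum_sub_distrib]
      exact sum_congr rfl fun i _ => by ring
    rw [e]
    refine (abs_sum_le_sum_abs _ _).trans (le_trans (sum_le_sum fun i _ => ?_) hcube)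
    rw [abs_mul, abs_of_pos (by positivity : 0 < 1 / N)]
    gcongr
    exact sig_two hN0 (hal' i)
  have hh : ∀ p, p ≤ 4 → |(∑ i, sig N p (a i)) * (1 / N) ^ 2 - n * u / N| ≤
      12 * (K ^ 3 * η ^ 2) := by
    intro p hp
    have e : (∑ i, sig N p (a i)) * (1 / N) ^ 2 - n * u / N =
        ∑ i, (sig N p (a i) - a i) * (1 / N) ^ 2 := by
      rw [← hs1, sum_mul, sum_div, ← sum_sub_distrib]
      refine sum_congr rfl fun i _ => ?_
      field_simp
    rw [e]
    have hp' : ∀ i, _ := fun i => sig_sub hN0 (hal' i) hp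
    rw [abs_of_nonneg (sum_nonneg fun i _ => mul_nonneg (hp' i).1 (by positivity))]
    calc _ ≤ ∑ i, 6 * (1 / N) * ((a i : ℝ) / N) ^ 2 := by
          refine sum_le_sum fun i _ => ?_
          calc _ ≤ 6 * ((a i : ℝ) ^ 2 / N) * (1 / N) ^ 2 := by gcongr; exact (hp' i).2
            _ = _ := by ring
      _ ≤ 6 * (K * η ^ 2) * (2 * K ^ 2) := by rw [← mul_sum]; gcongr
      _ = _ := by ring
  have h3 := hh 3 (by norm_num)
  have h4 := hh 4 (by norm_num)
  have h5 : 1 / N * v ≤ K ^ 2 * η ^ 2 := by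
    calc _ ≤ K * η ^ 2 * K := by gcongr
      _ = _ := by ring
  have h5' : 0 ≤ 1 / N * v := by positivity
  have m1 := R.mono 3 1 4 (by norm_num) le_rfl
  have m2 := R.mono 3 2 4 (by norm_num) (by norm_num)
  have m3 := R.mono 2 2 4 (by norm_num) (by norm_num)
  rw [pow_one] at m1
  rw [abs_le] at h2 h3 h4 ⊢
  constructor <;> linarith

/-- The log-likelihood ratio differs from `I_A - μ_I` by an error of expectation `O(η)`, as long as
all loads are within a factor `1 ± 1/8` of their mean. -/
lemma main_bound (K : ℝ) (hK : 1 ≤ K) : ∃ C : ℝ, 0 ≤ C ∧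
    ∀ (n m : ℕ) (a : Fin n → ℕ) (η : ℝ) (m' : ℕ) (t : Fin n → ℝ) (N u v : ℝ),
      Reg n m a K η → Model n m K m' t → N = m / n → u = (∑ i, (a i : ℝ)) / m →
      v = (∑ i, ((a i : ℝ) - (∑ j, (a j : ℝ)) / n) ^ 2) / N →
      ∃ Err : (Fin n → ℕ) → ℝ, (∀ y, 0 ≤ Err y) ∧ Ex n m' Err ≤ C * η ∧
        Ex n m' (fun y => ∑ i, |qm n m m' t y i| ^ 6) ≤ C * η ∧
        ∀ y, (∀ i, |qm n m m' t y i| ≤ 1 / 8) →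
          |∑ i, ∑ j ∈ range (a i), Real.log (N + N * qm n m m' t y i - j)
            - ∑ l ∈ range (∑ i, a i), Real.log (m - l) + (∑ i, (a i : ℝ)) * Real.log n
            - (∑ i, (a i : ℝ) * qm n m m' t y i - 1 / 2 * ∑ i, (a i : ℝ) * qm n m m' t y i ^ 2
              - (-(n * u / 2) + n * u ^ 2 / 4 + v / 2))| ≤ Err y := by
  obtain ⟨C1, hC1, H1⟩ := term_one K hK
  obtain ⟨C2, hC2, H2⟩ := term_two K hK
  obtain ⟨C3, hC3, H3⟩ := term_high 3 (by simp) K hK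
  obtain ⟨C4, hC4, H4⟩ := term_high 4 (by simp) K hK
  obtain ⟨C5, hC5, H5⟩ := term_rem K hK
  refine ⟨C1 + C2 + C3 + C4 + 4 * C5 + 110 * K ^ 4, by positivity, ?_⟩
  intro n m a η m' t N u v R M hN hu hv
  have hη := R.hη
  have B1 := H1 n m a η m' t R M
  have B2 := H2 n m a η m' t R M
  have B3 := H3 n m a η m' t R M
  have B4 := H4 n m a η m' t R M
  obtain ⟨B5, B6⟩ := H5 n m a η m' t R M
  rw [if_pos rfl] at B3
  rw [if_neg (by norm_num)] at B4
  rw [← hN] at B1 B2 B3 B4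
  set q := qm n m m' t with hq
  set X1 : (Fin n → ℕ) → ℝ := fun y => ∑ i, (sig N 1 (a i) - a i) * q y i with hX1
  set X2 : (Fin n → ℕ) → ℝ := fun y => ∑ i, (sig N 2 (a i) - a i) * q y i ^ 2 -
        (∑ i, (sig N 2 (a i) - a i)) * (1 / N) with hX2
  set X3 : (Fin n → ℕ) → ℝ := fun y => ∑ i, sig N 3 (a i) * q y i ^ 3 -
        (∑ i, sig N 3 (a i)) * (1 * (1 / N) ^ 2) with hX3
  set X4 : (Fin n → ℕ) → ℝ := fun y => ∑ i, sig N 4 (a i) * q y i ^ 4 -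
        (∑ i, sig N 4 (a i)) * (3 * (1 / N) ^ 2) with hX4
  set X5 : (Fin n → ℕ) → ℝ := fun y => ∑ i, (a i : ℝ) * |q y i| ^ 5 with hX5
  refine ⟨fun y => |X1 y| + (|X2 y| + (|X3 y| + (|X4 y| + (4 * X5 y + 110 * (K ^ 4 * η))))),
    fun y => by positivity, ?_, ?_, ?_⟩
  · rw [Ex_add, Ex_add, Ex_add, Ex_add, Ex_add, Ex_mul, Ex_const R.hn]
    linarith
  · refine B6.trans ?_
    gcongr
    have : 0 ≤ K ^ 4 := by positivity
    linarith
  · intro y hy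
    have hN0 : 0 < N := hN ▸ R.N_pos
    have hal' := R.alpha_le'
    simp only [← hN] at hal'
    have P1 : |∑ i, (∑ j ∈ range (a i), Real.log (N + N * q y i - j)
        - ∑ j ∈ range (a i), Real.log (N - j)
        - (q y i * sig N 1 (a i) - q y i ^ 2 * sig N 2 (a i) / 2 + q y i ^ 3 * sig N 3 (a i) / 3
          - q y i ^ 4 * sig N 4 (a i) / 4))| ≤ 4 * X5 y := by
      rw [hX5]; simp only []; rw [mul_sum]
      exact (abs_sum_le_sum_abs _ _).trans
        (sum_le_sum fun i _ => log_expand hN0 (hy i) (hal' i))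
    have P2 := det_part R hN hu hv
    have P3 := det_vals R hN hu
    have e : ∑ i, (∑ j ∈ range (a i), Real.log (N + N * q y i - j)
        - ∑ j ∈ range (a i), Real.log (N - j)
        - (q y i * sig N 1 (a i) - q y i ^ 2 * sig N 2 (a i) / 2 + q y i ^ 3 * sig N 3 (a i) / 3
          - q y i ^ 4 * sig N 4 (a i) / 4)) =
        ∑ i, ∑ j ∈ range (a i), Real.log (N + N * q y i - j)
        - ∑ i, ∑ j ∈ range (a i), Real.log (N - j)
        - (∑ i, (a i : ℝ) * q y i - 1 / 2 * ∑ i, (a i : ℝ) * q y i ^ 2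
          + X1 y - X2 y / 2 + X3 y / 3 - X4 y / 4)
        + ((∑ i, (sig N 2 (a i) - a i)) * (1 / N) / 2
          - (∑ i, sig N 3 (a i)) * (1 * (1 / N) ^ 2) / 3
          + (∑ i, sig N 4 (a i)) * (3 * (1 / N) ^ 2) / 4) := by
      have e1 : ∑ i, (q y i * sig N 1 (a i) - q y i ^ 2 * sig N 2 (a i) / 2
          + q y i ^ 3 * sig N 3 (a i) / 3 - q y i ^ 4 * sig N 4 (a i) / 4) =
          ∑ i, (a i : ℝ) * q y i - 1 / 2 * ∑ i, (a i : ℝ) * q y i ^ 2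
          + ∑ i, (sig N 1 (a i) - a i) * q y i - (∑ i, (sig N 2 (a i) - a i) * q y i ^ 2) / 2
          + (∑ i, sig N 3 (a i) * q y i ^ 3) / 3 - (∑ i, sig N 4 (a i) * q y i ^ 4) / 4 := by
        simp only [mul_sum, sum_div, ← sum_add_distrib, ← sum_sub_distrib]
        exact sum_congr rfl fun i _ => by ring
      rw [sum_sub_distrib, sum_sub_distrib, e1]
      simp only [hX1, hX2, hX3, hX4]; ring
    rw [e] at P1
    have b1 := abs_le.1 (le_refl |X1 y|)
    have b2 := abs_le.1 (le_refl |X2 y|)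
    have b3 := abs_le.1 (le_refl |X3 y|)
    have b4 := abs_le.1 (le_refl |X4 y|)
    have a2 := abs_nonneg (X2 y)
    have a3 := abs_nonneg (X3 y)
    have a4 := abs_nonneg (X4 y)
    clear_value X1 X2 X3 X4 X5
    rw [abs_le] at P1 P2 P3 ⊢
    constructor <;> linarith

/-! ### Error probability for a fixed number of bins -/

lemma stProb_pos {n m : ℕ} (hn : 0 < n) {z : Fin n → ℕ} (hz : ∑ i, z i = m) :
    0 < stProb n m z := by
  rw [stProb, if_pos hz]; positivity

lemma plProb_pos {n m : ℕ} (hn : 0 < n) {a z : Fin n → ℕ} (hz : ∑ i, z i = m)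
    (haz : ∀ i, a i ≤ z i) : 0 < plProb n m a z := by
  rw [plProb, if_pos ⟨hz, haz⟩]; positivity

/-- The log-likelihood ratio of a configuration that dominates the planting. -/
lemma log_plProb_sub {n m : ℕ} (hn : 0 < n) {a z : Fin n → ℕ} (hz : ∑ i, z i = m)
    (haz : ∀ i, a i ≤ z i) :
    Real.log (plProb n m a z) - Real.log (stProb n m z) =
      ∑ i, ∑ j ∈ range (a i), Real.log ((z i : ℝ) - j)
        - ∑ l ∈ range (∑ i, a i), Real.log ((m : ℝ) - l) + (∑ i, (a i : ℝ)) * Real.log n := by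
  have hk : ∑ i, a i ≤ m := hz ▸ sum_le_sum fun i _ => haz i
  have h := congrArg Real.log (stProb_mul_descFactorial hn a z hk)
  have hd : ∀ i, ((z i).descFactorial (a i) : ℝ) ≠ 0 := fun i => by
    have := Nat.descFactorial_pos.2 (haz i); positivity
  have hd2 : (m.descFactorial (∑ i, a i) : ℝ) ≠ 0 := by
    have := Nat.descFactorial_pos.2 hk; positivity
  have hlog : ∀ (x j : ℕ), j ≤ x → Real.log (x.descFactorial j : ℝ)
      = ∑ l ∈ range j, Real.log ((x : ℝ) - l) := by
    intro x j hj
    rw [cast_desc, Real.log_prod]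
    intro l hl
    have hl' : (l : ℝ) < x := by exact_mod_cast (mem_range.1 hl).trans_le hj
    exact (sub_pos.2 hl').ne'
  have hn' : ((n : ℝ)⁻¹) ^ (∑ i, a i) ≠ 0 := by positivity
  rw [Real.log_mul (stProb_pos hn hz).ne' (prod_ne_zero_iff.2 fun i _ => hd i),
    Real.log_mul (mul_ne_zero hd2 hn') (plProb_pos hn hz haz).ne', Real.log_mul hd2 hn',
    Real.log_pow, Real.log_inv, Real.log_prod (fun i _ => hd i), hlog m _ hk,
    sum_congr rfl fun i _ => hlog (z i) (a i) (haz i)] at h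
  push_cast at h
  linarith

section
variable {n m : ℕ} {a β : Fin n → ℕ} {K η : ℝ}

lemma sum_sq_center (hn : 0 < n) (b : Fin n → ℕ) :
    ∑ i, ((b i : ℝ) - (∑ j, (b j : ℝ)) / n) ^ 2 = n * plantV n b := by
  have hn' : (n : ℝ) ≠ 0 := by positivity
  simp only [sub_sq, sum_add_distrib, sum_sub_distrib, ← sum_mul, ← mul_sum, plantV, sum_const,
    card_univ, Fintype.card_fin, nsmul_eq_mul]
  field_simp
  ring

/-- A sample obtained by adding a fixed planting `β` to `m - ∑ β` uniform balls fits `Model`.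
The cases `β = 0` and `β = a` are the standard and the planted distribution. -/
lemma Reg.model (R : Reg n m a K η) (hle : ∑ i, β i ≤ m)
    (h1 : ∑ i, (β i : ℝ) ≤ K * η ^ 2 * m)
    (h2 : ∑ i, ((β i : ℝ) - (∑ j, (β j : ℝ)) / n) ^ 2 ≤ K * ((m : ℝ) / n)) :
    Model n m K (m - ∑ i, β i)
      (fun i => ((β i : ℝ) - (∑ j, (β j : ℝ)) / n) / √((m : ℝ) / n)) := by
  have hn := R.n_pos
  have hm := R.m_pos
  have hN := R.N_pos
  have hNl := R.N_large
  have hη := R.eta_le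
  have hη0 := R.hη
  have hKη : K * η ^ 2 ≤ 1 / 2 := by
    have := R.hsmall
    have hK := R.hK
    have : K * η ≤ 1 := by nlinarith
    nlinarith
  have hcast : ((m - ∑ i, β i : ℕ) : ℝ) = m - ∑ i, (β i : ℝ) := by
    rw [Nat.cast_sub hle]; push_cast; rfl
  have hb0 : 0 ≤ ∑ i, (β i : ℝ) := sum_nonneg fun i _ => Nat.cast_nonneg _
  have hmn : 1024 * (n : ℝ) ≤ m := (le_div_iff₀ hn).1 hNl
  have hn1 : (1 : ℝ) ≤ n := by exact_mod_cast R.hn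
  have hhalf : (m : ℝ) / 2 ≤ m - ∑ i, (β i : ℝ) := by nlinarith
  refine ⟨?_, ?_, ?_, ?_, ?_, ?_⟩
  · simp only [div_pow, R.s_sq]
    rw [← sum_div, div_le_iff₀ hN]; exact h2
  · rw [← sum_div, sum_sub_distrib]
    simp only [sum_const, card_univ, Fintype.card_fin, nsmul_eq_mul]
    rw [mul_div_cancel₀ _ hn.ne', sub_self, zero_div]
  · have : (8 : ℝ) ≤ ((m - ∑ i, β i : ℕ) : ℝ) := by rw [hcast]; linarith
    exact_mod_cast this
  · rw [hcast, le_div_iff₀ hn]; linarith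
  · rw [hcast]; gcongr; linarith
  · rw [hcast]
    have e : n * (1 - (m - ∑ i, (β i : ℝ)) / n / ((m : ℝ) / n)) = n * (∑ i, (β i : ℝ)) / m := by
      field_simp; ring
    rw [e, div_le_iff₀ hm]
    have hs := R.sqrt_n
    have hs2 : √(n : ℝ) * √(n : ℝ) = n := Real.mul_self_sqrt hn.le
    calc (n : ℝ) * ∑ i, (β i : ℝ) ≤ n * (K * η ^ 2 * m) := by gcongr
      _ = K * √n * m * (√n * η ^ 2) := by rw [← hs2, Real.sqrt_mul_self (Real.sqrt_nonneg _)]; ring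
      _ = K * √n * m := by rw [hs, mul_one]

lemma Reg.qStat_eq (R : Reg n m a K η) (hle : ∑ i, β i ≤ m) (y : Fin n → ℕ) (i : Fin n) :
    qStat n m (fun i => β i + y i) i = qm n m (m - ∑ i, β i)
      (fun i => ((β i : ℝ) - (∑ j, (β j : ℝ)) / n) / √((m : ℝ) / n)) y i := by
  have hn := R.n_pos
  have hm := R.m_pos
  have hcast : ((m - ∑ i, β i : ℕ) : ℝ) = m - ∑ i, (β i : ℝ) := by
    rw [Nat.cast_sub hle]; push_cast; rfl
  unfold qStat qm dev
  rw [← add_div, div_div, ← sq, R.s_sq, hcast]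
  push_cast
  field_simp
  ring

lemma Reg.muI_eq (R : Reg n m a K η) :
    muI n m a = -(n * ((∑ i, (a i : ℝ)) / m) / 2) + n * ((∑ i, (a i : ℝ)) / m) ^ 2 / 4
      + (∑ i, ((a i : ℝ) - (∑ j, (a j : ℝ)) / n) ^ 2) / ((m : ℝ) / n) / 2 := by
  have hn := R.n_pos
  have hm := R.m_pos
  rw [sum_sq_center R.hn, muI]
  field_simp
end

/-- The set of configurations on which thresholding `I_A` agrees with comparing likelihoods. -/
def goodSet (n m : ℕ) (a : Fin n → ℕ) (ε : ℝ) : Set (Fin n → ℕ) :=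
  {z | (IStat n m a z ≥ muI n m a + ε → plProb n m a z > stProb n m z) ∧
       (IStat n m a z ≤ muI n m a - ε → stProb n m z > plProb n m a z)}

/-- If the log-likelihood ratio is within less than `ε` of `I_A - μ_I`, the threshold test and the
likelihood comparison agree. -/
lemma mem_goodSet {n m : ℕ} (hn : 0 < n) {a z : Fin n → ℕ} {ε : ℝ} (hz : ∑ i, z i = m)
    (haz : ∀ i, a i ≤ z i)
    (h : |Real.log (plProb n m a z) - Real.log (stProb n m z) - (IStat n m a z - muI n m a)| < ε) :
    z ∈ goodSet n m a ε := by
  have h' := abs_lt.1 h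
  have hs := stProb_pos hn hz
  have hp := plProb_pos hn hz haz
  refine ⟨fun hI => ?_, fun hI => ?_⟩
  · exact (Real.log_lt_log_iff hs hp).1 (by linarith)
  · exact (Real.log_lt_log_iff hp hs).1 (by linarith)

open Classical in
/-- The error probability is `O(η)`, uniformly over all instances satisfying `Reg`. -/
lemma prob_bound (K ε : ℝ) (hK : 1 ≤ K) (hε : 0 < ε) : ∃ C : ℝ,
    ∀ (n m : ℕ) (a β : Fin n → ℕ) (η : ℝ), Reg n m a K η → ∑ i, β i ≤ m →
      ∑ i, (β i : ℝ) ≤ K * η ^ 2 * m →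
      ∑ i, ((β i : ℝ) - (∑ j, (β j : ℝ)) / n) ^ 2 ≤ K * ((m : ℝ) / n) →
      1 - C * η ≤ probOf (plProb n m β) (goodSet n m a ε) ∧
        probOf (plProb n m β) (goodSet n m a ε) ≤ 1 := by
  obtain ⟨C, hC, H⟩ := main_bound K hK
  refine ⟨8 ^ 6 * C + ε⁻¹ * C, fun n m a β η R hle h1 h2 => ?_⟩
  obtain ⟨Err, hErr0, hErr, hq6, hmain⟩ := H n m a η _ _ _ _ _ R (R.model hle h1 h2) rfl rfl rfl
  simp only [← R.qStat_eq hle] at hq6 hmain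
  rw [probOf_plProb β hle]
  set Q : (Fin n → ℕ) → Fin n → ℝ := fun y i => qStat n m (fun i => β i + y i) i with hQ
  constructor
  · have key : Ex n (m - ∑ i, β i) (fun y => 1 + ((-(8 ^ 6)) * (∑ i, |Q y i| ^ 6)
        + (-ε⁻¹) * Err y)) ≤ Ex n (m - ∑ i, β i)
        (fun y => if (fun i => β i + y i) ∈ goodSet n m a ε then 1 else 0) := by
      refine Ex_mono fun y hy => ?_
      have hz : ∑ i, (β i + y i) = m := by rw [sum_add_distrib, hy]; omega
      have hS0 : 0 ≤ ∑ i, |Q y i| ^ 6 := sum_nonneg fun i _ => by positivity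
      have hE0 : 0 ≤ ε⁻¹ * Err y := mul_nonneg (by positivity) (hErr0 y)
      -- If some `|Q i| > 1 / 8` the sixth powers make the left side negative, and so does
      -- `Err ≥ ε`; in the remaining case the sample lies in `goodSet`.
      by_cases hq : ∀ i, |Q y i| ≤ 1 / 8
      · by_cases hE : Err y < ε
        · rw [if_pos]
          · linarith
          have hzi : ∀ i, ((β i + y i : ℕ) : ℝ) = (m : ℝ) / n + (m : ℝ) / n * Q y i := by
            intro i
            have hn := R.n_pos
            have hm := R.m_pos
            simp only [hQ, qStat]
            field_simp
            ring
          have haz : ∀ i, a i ≤ β i + y i := by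
            intro i
            have h3 := R.alpha_le' i
            have h4 := (abs_le.1 (hq i)).1
            have h5 := R.N_pos
            have : (a i : ℝ) ≤ ((β i + y i : ℕ) : ℝ) := by rw [hzi]; nlinarith
            exact_mod_cast this
          refine mem_goodSet R.hn hz haz (lt_of_le_of_lt ?_ hE)
          rw [log_plProb_sub R.hn hz haz, R.muI_eq]
          simp only [hzi, IStat, HStat, FStat]
          exact hmain y hq
        · have : 1 ≤ ε⁻¹ * Err y := by
            rw [inv_mul_eq_div, le_div_iff₀ hε]; linarith [not_lt.1 hE]
          have h0 : (0 : ℝ) ≤ if (fun i => β i + y i) ∈ goodSet n m a ε then 1 else 0 := by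
            split_ifs <;> norm_num
          linarith
      · push Not at hq
        obtain ⟨i, hi⟩ := hq
        have h6 : (1 / 8 : ℝ) ^ 6 ≤ |Q y i| ^ 6 := by gcongr
        have h7 : |Q y i| ^ 6 ≤ ∑ i, |Q y i| ^ 6 :=
          single_le_sum (f := fun i => |Q y i| ^ 6) (fun i _ => by positivity) (mem_univ i)
        have h0 : (0 : ℝ) ≤ if (fun i => β i + y i) ∈ goodSet n m a ε then 1 else 0 := by
          split_ifs <;> norm_num
        norm_num at h6 ⊢
        linarith
    rw [Ex_add, Ex_const R.hn, Ex_add, Ex_mul, Ex_mul] at key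
    have h8 : ε⁻¹ * Ex n (m - ∑ i, β i) Err ≤ ε⁻¹ * (C * η) := by gcongr
    change Ex n (m - ∑ i, β i) (fun y => ∑ i, |Q y i| ^ 6) ≤ _ at hq6
    linarith
  · calc _ ≤ Ex n (m - ∑ i, β i) (fun _ => 1) := Ex_mono fun y _ => by split_ifs <;> norm_num
      _ = 1 := Ex_const R.hn _ _

/-! ### From the asymptotic regime to its non-asymptotic form -/

lemma tendsto_eta : Tendsto (fun n : ℕ => (√√(n : ℝ))⁻¹) atTop (𝓝 0) :=
  tendsto_inv_atTop_zero.comp (Real.tendsto_sqrt_atTop.comp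
    (Real.tendsto_sqrt_atTop.comp tendsto_natCast_atTop_atTop))

/-- A bound `n ^ (3/2) V / k ≤ B` with `B < √n / 2` forces `n ≤ 2 k`: integrality gives
`∑ a_i² ≥ k`, so that `k < n / 2` would make `n V ≥ k / 2` and `n ^ (3/2) V / k ≥ √n / 2`. -/
lemma le_two_mul_of_var {n : ℕ} (hn : 0 < n) (a : Fin n → ℕ) {B : ℝ} (hB : 2 * B < √n)
    (h : √n * (n * plantV n a) ≤ B * ∑ i, (a i : ℝ)) (hk : 0 < ∑ i, (a i : ℝ)) :
    (n : ℝ) ≤ 2 * ∑ i, (a i : ℝ) := by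
  by_contra hlt
  push Not at hlt
  have hn' : (0 : ℝ) < n := by exact_mod_cast hn
  set k := ∑ i, (a i : ℝ) with hkdef
  have h1 : k ≤ ∑ i, (a i : ℝ) ^ 2 := by
    refine sum_le_sum fun i _ => ?_
    exact_mod_cast Nat.le_self_pow two_ne_zero (a i)
  have h2 : n * plantV n a = ∑ i, (a i : ℝ) ^ 2 - k * (k / n) := by
    rw [plantV, ← hkdef]; field_simp
  have h3 : k / n ≤ 1 / 2 := by rw [div_le_iff₀ hn']; linarith
  have h4 : k / 2 ≤ n * plantV n a := by rw [h2]; nlinarith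
  have h5 : √n * (k / 2) ≤ √n * (n * plantV n a) := by gcongr
  nlinarith

/-- The asymptotic hypotheses give `Reg` for all large `n`, with a single constant `K` and
`η = n ^ (-1/4)`. -/
lemma eventually_reg (A : (n : ℕ) → Fin n → ℕ) (m k : ℕ → ℕ)
    (hka : ∀ n, ∑ i, A n i = k n)
    (hk : Tendsto (fun n : ℕ => (k n : ℝ) / Real.sqrt n) atTop atTop)
    (lam c : ℝ) (hlam : 0 < lam) (hc : 0 < c) (hreg : IntermediateRegime A m k lam c) :
    ∃ K : ℝ, 1 ≤ K ∧ ∀ᶠ n : ℕ in atTop, Reg n (m n) (A n) K (√√(n : ℝ))⁻¹ := by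
  set K : ℝ := 1 + 4 / c + 2 * (lam + 1) / c with hKdef
  have p1 : 0 < 4 / c := by positivity
  have p2 : 0 < 2 * (lam + 1) / c := by positivity
  refine ⟨K, by linarith, ?_⟩
  have e1 := hreg.1.eventually (gt_mem_nhds (lt_add_one lam))
  have e2 := hreg.2.eventually (lt_mem_nhds (half_lt_self hc))
  have e3 := hk.eventually_ge_atTop 1
  have e4 : ∀ᶠ n : ℕ in atTop, 2 * (lam + 1) < √(n : ℝ) :=
    (Real.tendsto_sqrt_atTop.comp tendsto_natCast_atTop_atTop).eventually_gt_atTop _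
  have e5 : ∀ᶠ n : ℕ in atTop, (√√(n : ℝ))⁻¹ < 1 / (32 * K ^ 2) :=
    tendsto_eta.eventually (gt_mem_nhds (by positivity))
  filter_upwards [e1, e2, e3, e4, e5, eventually_gt_atTop 0] with n h1 h2 h3 h4 h5 hn
  have hn' : (0 : ℝ) < n := by exact_mod_cast hn
  have hS : 0 < √(n : ℝ) := Real.sqrt_pos.2 hn'
  have hS2 : √(n : ℝ) * √(n : ℝ) = n := Real.mul_self_sqrt hn'.le
  have hkr : ∑ i, (A n i : ℝ) = k n := by rw [← hka n]; push_cast; rfl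
  have hk0 : (0 : ℝ) < k n := by
    rw [le_div_iff₀ hS] at h3; linarith
  have hη2 : ((√√(n : ℝ))⁻¹) ^ 2 = (√(n : ℝ))⁻¹ := by
    rw [inv_pow, Real.sq_sqrt hS.le]
  have h32 : (n : ℝ) ^ ((3 : ℝ) / 2) = √n * n := by
    rw [show (3 : ℝ) / 2 = 1 / 2 + 1 by norm_num, Real.rpow_add hn', Real.rpow_one,
      Real.sqrt_eq_rpow]
  rw [h32, div_lt_iff₀ hk0, mul_assoc] at h1
  rw [lt_div_iff₀ (by positivity)] at h2
  have hnk : (n : ℝ) ≤ 2 * k n := by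
    rw [← hkr]
    exact le_two_mul_of_var hn (A n) h4 (by rw [hkr]; exact h1.le) (by rw [hkr]; exact hk0)
  have hm0 : (0 : ℝ) ≤ m n := Nat.cast_nonneg _
  have hkm : (k n : ℝ) ≤ 2 / c * ((√(n : ℝ))⁻¹ * m n) := by
    have : (k n : ℝ) = 2 / c * ((√(n : ℝ))⁻¹ * (c / 2 * (k n * √n))) := by field_simp
    rw [this]; gcongr
  have hx : 0 ≤ (√(n : ℝ))⁻¹ * m n := by positivity
  have hk4 : 4 / c * ((√(n : ℝ))⁻¹ * m n) ≤ K * ((√(n : ℝ))⁻¹ * m n) := by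
    gcongr; linarith
  have e : 4 / c = 2 * (2 / c) := by ring
  rw [e] at hk4
  refine ⟨hn, by linarith, by positivity, ?_, ?_, ?_, ?_, ?_⟩
  · rw [show ((√√(n : ℝ))⁻¹) ^ 4 = (((√√(n : ℝ))⁻¹) ^ 2) ^ 2 by ring, hη2]
    field_simp
    rw [sq, hS2]
  · rw [hkr, hη2, mul_assoc]; linarith
  · rw [hη2, mul_assoc]; linarith
  · rw [sum_sq_center hn]
    have hV : n * plantV n (A n) ≤ (lam + 1) * (k n / √n) := by
      rw [← mul_div_assoc, le_div_iff₀ hS]; linarith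
    have hkN : k n / √(n : ℝ) ≤ 2 / c * ((m n : ℝ) / n) := by
      rw [div_le_iff₀ hS]
      refine hkm.trans (le_of_eq ?_)
      nth_rw 2 [← hS2]
      field_simp
    have hN0 : 0 ≤ (m n : ℝ) / n := by positivity
    calc n * plantV n (A n) ≤ (lam + 1) * (2 / c * ((m n : ℝ) / n)) := hV.trans (by gcongr)
      _ = 2 * (lam + 1) / c * ((m n : ℝ) / n) := by ring
      _ ≤ K * ((m n : ℝ) / n) := by gcongr; linarith
  · rw [lt_div_iff₀ (by positivity)] at h5; linarith

/-! ### The limit -/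

/-- Intermediate regime: whp under both ST and PL, the threshold
strategy based on `I_A` agrees with the optimal likelihood comparison. -/
theorem intermediate_regime_optimal (A : (n : ℕ) → Fin n → ℕ) (m k : ℕ → ℕ)
    (hka : ∀ n, ∑ i, A n i = k n) (hkm : ∀ n, k n ≤ m n)
    (hk : Tendsto (fun n : ℕ => (k n : ℝ) / Real.sqrt n) atTop atTop)
    (lam c : ℝ) (hlam : 0 < lam) (hc : 0 < c)
    (hreg : IntermediateRegime A m k lam c)
    (ε : ℝ) (hε : 0 < ε) :
    Tendsto (fun n : ℕ => probOf (stProb n (m n))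
        {z | (IStat n (m n) (A n) z ≥ muI n (m n) (A n) + ε →
                plProb n (m n) (A n) z > stProb n (m n) z) ∧
             (IStat n (m n) (A n) z ≤ muI n (m n) (A n) - ε →
                stProb n (m n) z > plProb n (m n) (A n) z)})
      atTop (𝓝 1) ∧
    Tendsto (fun n : ℕ => probOf (plProb n (m n) (A n))
        {z | (IStat n (m n) (A n) z ≥ muI n (m n) (A n) + ε →
                plProb n (m n) (A n) z > stProb n (m n) z) ∧
             (IStat n (m n) (A n) z ≤ muI n (m n) (A n) - ε →
                stProb n (m n) z > plProb n (m n) (A n) z)})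
      atTop (𝓝 1) := by
  obtain ⟨K, hK, hR⟩ := eventually_reg A m k hka hk lam c hlam hc hreg
  obtain ⟨C, hC⟩ := prob_bound K ε hK hε
  have hlim : Tendsto (fun n : ℕ => 1 - C * (√√(n : ℝ))⁻¹) atTop (𝓝 1) := by
    simpa using tendsto_const_nhds.sub (tendsto_eta.const_mul C)
  have hst : ∀ᶠ n : ℕ in atTop,
      1 - C * (√√(n : ℝ))⁻¹ ≤ probOf (stProb n (m n)) (goodSet n (m n) (A n) ε) ∧
        probOf (stProb n (m n)) (goodSet n (m n) (A n) ε) ≤ 1 := by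
    filter_upwards [hR] with n R
    rw [stProb_eq_plProb_zero]
    have h1 := R.hη
    have h2 := R.N_pos
    refine hC n (m n) (A n) (fun _ => 0) _ R (by simp) ?_ ?_
    · simp only [Nat.cast_zero, sum_const_zero]; positivity
    · simp only [Nat.cast_zero, sum_const_zero, zero_div, sub_zero, ne_eq, OfNat.ofNat_ne_zero,
        not_false_eq_true, zero_pow]
      positivity
  have hpl : ∀ᶠ n : ℕ in atTop,
      1 - C * (√√(n : ℝ))⁻¹ ≤ probOf (plProb n (m n) (A n)) (goodSet n (m n) (A n) ε) ∧
        probOf (plProb n (m n) (A n)) (goodSet n (m n) (A n) ε) ≤ 1 := by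
    filter_upwards [hR] with n R
    exact hC n (m n) (A n) (A n) _ R ((hka n).trans_le (hkm n)) R.hk R.hv
  exact ⟨tendsto_of_tendsto_of_tendsto_of_le_of_le' hlim tendsto_const_nhds
      (hst.mono fun _ h => h.1) (hst.mono fun _ h => h.2),
    tendsto_of_tendsto_of_tendsto_of_le_of_le' hlim tendsto_const_nhds
      (hpl.mono fun _ h => h.1) (hpl.mono fun _ h => h.2)⟩
end

section
/- Suppose k(n)/√n → ∞ and one of the three regimes holds: (Flat) n^{3/2}V(A)/k → 0 and m/(k n^{1/2}) → c > 0; (Intermediate) n^{3/2}V(A)/k → λ > 0 and m/(k n^{1/2}) → c > 0; or (Hilly) n^{3/2}V(A)/k → ∞ and m/(V(A)n²) → c > 0. Then (n²/m²)·(Σ_{i=1}^n a_i³ − k³/n²) → 0 as n → ∞; that is, Σ_i a_i³ = k³/n² + o(m²/n²). -/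
/-!
Write `μ = k/n` for the mean of the planting and `d_i = a_i - μ`. Since `∑ d_i = 0` and
`∑ d_i² = nV`, expanding the cube gives `∑ a_i³ - k³/n² = 3kV + ∑ d_i³`, and
`|∑ d_i³| ≤ (nV)^{3/2}` because every `|d_i|` is at most `√(∑ d_j²)` (`abs_cube_sum_sub_le`).

Each regime provides a constant `C` with `n²V ≤ Cm` and `k√n ≤ Cm` for all large `n`
(`exists_const_of_tendsto`, `exists_const_of_hilly`). These two bounds alone turn the estimate
above, multiplied by `n²/m²`, into `3C²/√n + C √(C²√n/k)` (`scaled_bound`), which tends to `0`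
because `k/√n → ∞`.
-/

open Finset Filter Topology

/-- `n V(A) = ∑ (a_i - k/n)²`. -/
lemma nat_mul_plantV (n : ℕ) (hn : 0 < n) (a : Fin n → ℕ) :
    (n : ℝ) * plantV n a = ∑ i, ((a i : ℝ) - (∑ j, (a j : ℝ)) / n) ^ 2 := by
  have hn' : (n : ℝ) ≠ 0 := by positivity
  unfold plantV
  set K := ∑ j, (a j : ℝ) with hK
  have h : ∑ i, ((a i : ℝ) - K / n) ^ 2
      = ∑ i, (a i : ℝ) ^ 2 - 2 * (K / n) * K + n * (K / n) ^ 2 := by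
    conv_rhs => rw [hK, Finset.mul_sum, ← hK]
    rw [← Finset.sum_sub_distrib]
    have : (n : ℝ) * (K / n) ^ 2 = ∑ _i : Fin n, (K / n) ^ 2 := by simp
    rw [this, ← Finset.sum_add_distrib]
    exact Finset.sum_congr rfl fun i _ => by ring
  rw [h]
  field_simp
  ring

lemma plantV_nonneg (n : ℕ) (hn : 0 < n) (a : Fin n → ℕ) : 0 ≤ plantV n a := by
  have hn' : (0 : ℝ) < n := by positivity
  have h := nat_mul_plantV n hn a
  have h2 : 0 ≤ (n : ℝ) * plantV n a := h ▸ Finset.sum_nonneg fun i _ => sq_nonneg _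
  exact nonneg_of_mul_nonneg_right h2 hn'

lemma abs_sum_cube_le {ι : Type*} (s : Finset ι) (d : ι → ℝ) :
    |∑ i ∈ s, d i ^ 3| ≤ (∑ i ∈ s, d i ^ 2) * Real.sqrt (∑ i ∈ s, d i ^ 2) := by
  refine (Finset.abs_sum_le_sum_abs _ _).trans ?_
  rw [Finset.sum_mul]
  refine Finset.sum_le_sum fun i hi => ?_
  have h : |d i| ≤ Real.sqrt (∑ i ∈ s, d i ^ 2) :=
    Real.abs_le_sqrt (Finset.single_le_sum (f := fun i => d i ^ 2) (fun j _ => sq_nonneg _) hi)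
  rw [abs_pow, pow_succ, sq_abs]
  exact mul_le_mul_of_nonneg_left h (sq_nonneg _)

lemma abs_cube_sum_sub_le (n : ℕ) (hn : 0 < n) (a : Fin n → ℕ) :
    |∑ i, (a i : ℝ) ^ 3 - (∑ i, (a i : ℝ)) ^ 3 / (n : ℝ) ^ 2| ≤
      3 * (∑ i, (a i : ℝ)) * plantV n a + n * plantV n a * Real.sqrt (n * plantV n a) := by
  have hn' : (n : ℝ) ≠ 0 := by positivity
  have hV := plantV_nonneg n hn a
  have hsq := nat_mul_plantV n hn a
  have hcube := abs_sum_cube_le Finset.univ (fun i => (a i : ℝ) - (∑ j, (a j : ℝ)) / n)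
  rw [← hsq] at hcube
  have hexp : ∑ i, (a i : ℝ) ^ 3 - (∑ i, (a i : ℝ)) ^ 3 / (n : ℝ) ^ 2
      = 3 * (∑ i, (a i : ℝ)) * plantV n a
        + ∑ i, ((a i : ℝ) - (∑ j, (a j : ℝ)) / n) ^ 3 := by
    unfold plantV
    set K := ∑ j, (a j : ℝ) with hK
    have h : ∑ i, ((a i : ℝ) - K / n) ^ 3 = ∑ i, (a i : ℝ) ^ 3
        - 3 * (K / n) * ∑ i, (a i : ℝ) ^ 2 + 3 * (K / n) ^ 2 * K - n * (K / n) ^ 3 := by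
      conv_rhs => rw [hK, Finset.mul_sum, Finset.mul_sum, ← hK]
      have : (n : ℝ) * (K / n) ^ 3 = ∑ _i : Fin n, (K / n) ^ 3 := by simp
      rw [this, ← Finset.sum_sub_distrib, ← Finset.sum_add_distrib, ← Finset.sum_sub_distrib]
      exact Finset.sum_congr rfl fun i _ => by ring
    rw [h]
    field_simp
    ring
  rw [hexp]
  refine (abs_add_le _ _).trans (add_le_add (le_of_eq (abs_of_nonneg ?_)) hcube)
  have : 0 ≤ ∑ i, (a i : ℝ) := Finset.sum_nonneg fun i _ => by positivity
  positivity

lemma rpow_three_halves (n : ℕ) : (n : ℝ) ^ ((3 : ℝ) / 2) = Real.sqrt n ^ 3 := by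
  rw [Real.sqrt_eq_rpow, ← Real.rpow_natCast, ← Real.rpow_mul (by positivity)]
  norm_num

/-- The Flat (`lam = 0`) and Intermediate (`lam > 0`) regimes. -/
lemma exists_const_of_tendsto (A : (n : ℕ) → Fin n → ℕ) (m k : ℕ → ℕ) (lam c : ℝ)
    (hlam : 0 ≤ lam) (hc : 0 < c)
    (hk : ∀ᶠ n in atTop, 0 < k n) (h : IntermediateRegime A m k lam c) :
    ∃ C : ℝ, 0 < C ∧ ∀ᶠ n : ℕ in atTop,
      (n : ℝ) ^ 2 * plantV n (A n) ≤ C * m n ∧ k n * Real.sqrt n ≤ C * m n := by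
  obtain ⟨h1, h2⟩ := h
  refine ⟨(lam + 1) * (2 / c), by positivity, ?_⟩
  filter_upwards [hk, h1.eventually_le_const (lt_add_one lam),
    h2.eventually_const_le (half_lt_self hc), eventually_gt_atTop 0] with n hk h1 h2 hn
  have hk' : (0 : ℝ) < k n := by exact_mod_cast hk
  have hs : 0 < Real.sqrt n := Real.sqrt_pos.2 (by exact_mod_cast hn)
  have hs2 : Real.sqrt n ^ 2 = n := Real.sq_sqrt (by positivity)
  rw [rpow_three_halves, div_le_iff₀ hk'] at h1
  rw [le_div_iff₀ (by positivity)] at h2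
  have hm : k n * Real.sqrt n ≤ 2 / c * m n := by
    rw [div_mul_eq_mul_div, le_div_iff₀ hc]
    linarith
  have hm0 : 0 ≤ 2 / c * m n := by positivity
  constructor
  · calc (n : ℝ) ^ 2 * plantV n (A n)
        = (Real.sqrt n ^ 2) ^ 2 * plantV n (A n) := by rw [hs2]
      _ = Real.sqrt n * (Real.sqrt n ^ 3 * plantV n (A n)) := by ring
      _ ≤ Real.sqrt n * ((lam + 1) * k n) := mul_le_mul_of_nonneg_left h1 hs.le
      _ = (lam + 1) * (k n * Real.sqrt n) := by ring
      _ ≤ (lam + 1) * (2 / c * m n) := mul_le_mul_of_nonneg_left hm (by positivity)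
      _ = _ := by ring
  · rw [mul_assoc]
    nlinarith [mul_nonneg hlam hm0]

lemma exists_const_of_hilly (A : (n : ℕ) → Fin n → ℕ) (m k : ℕ → ℕ) (c : ℝ) (hc : 0 < c)
    (hk : ∀ᶠ n in atTop, 0 < k n) (h : HillyRegime A m k c) :
    ∃ C : ℝ, 0 < C ∧ ∀ᶠ n : ℕ in atTop,
      (n : ℝ) ^ 2 * plantV n (A n) ≤ C * m n ∧ k n * Real.sqrt n ≤ C * m n := by
  obtain ⟨h1, h2⟩ := h
  refine ⟨2 / c, by positivity, ?_⟩
  filter_upwards [hk, h1.eventually_ge_atTop 1,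
    h2.eventually_const_le (half_lt_self hc), eventually_gt_atTop 0] with n hk h1 h2 hn
  have hk' : (0 : ℝ) < k n := by exact_mod_cast hk
  have hn' : (0 : ℝ) < n := by exact_mod_cast hn
  have hs : 0 < Real.sqrt n := Real.sqrt_pos.2 hn'
  have hs2 : Real.sqrt n ^ 2 = n := Real.sq_sqrt (by positivity)
  rw [rpow_three_halves, le_div_iff₀ hk', one_mul] at h1
  have hV : 0 < plantV n (A n) := pos_of_mul_pos_right (hk'.trans_le h1) (by positivity)
  rw [le_div_iff₀ (by positivity)] at h2
  have hm : (n : ℝ) ^ 2 * plantV n (A n) ≤ 2 / c * m n := by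
    rw [div_mul_eq_mul_div, le_div_iff₀ hc]
    linarith
  refine ⟨hm, le_trans ?_ hm⟩
  calc k n * Real.sqrt n ≤ (Real.sqrt n ^ 3 * plantV n (A n)) * Real.sqrt n :=
        mul_le_mul_of_nonneg_right h1 hs.le
    _ = (Real.sqrt n ^ 2) ^ 2 * plantV n (A n) := by ring
    _ = _ := by rw [hs2]

lemma scaled_bound (n m k V C : ℝ) (hn : 0 < n) (hm : 0 < m) (hk : 0 < k) (hV : 0 ≤ V)
    (hC : 0 < C) (h1 : n ^ 2 * V ≤ C * m) (h2 : k * Real.sqrt n ≤ C * m) :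
    n ^ 2 / m ^ 2 * (3 * k * V + n * V * Real.sqrt (n * V)) ≤
      3 * C ^ 2 * (Real.sqrt n)⁻¹ + C * Real.sqrt (C ^ 2 * (k / Real.sqrt n)⁻¹) := by
  have hs : 0 < Real.sqrt n := Real.sqrt_pos.2 hn
  have hs2 : Real.sqrt n * Real.sqrt n = n := Real.mul_self_sqrt hn.le
  have hW : n ^ 2 * V / m ≤ C := by rwa [div_le_iff₀ hm]
  have hkm : k / m ≤ C * (Real.sqrt n)⁻¹ := by
    rw [← div_eq_mul_inv, div_le_div_iff₀ hm hs]
    exact h2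
  have hnm : n / m ≤ C * (k / Real.sqrt n)⁻¹ := by
    rw [inv_div, ← mul_div_assoc, div_le_div_iff₀ hm hk]
    calc n * k = (k * Real.sqrt n) * Real.sqrt n := by rw [mul_assoc, hs2]; ring
      _ ≤ (C * m) * Real.sqrt n := mul_le_mul_of_nonneg_right h2 hs.le
      _ = _ := by ring
  have hW0 : 0 ≤ n ^ 2 * V / m := by positivity
  -- The factor `n/m` is absorbed into the square root:
  -- `(n/m) √(nV) = √((n²V/m)(n/m))`.
  have hroot : n / m * Real.sqrt (n * V) ≤ Real.sqrt (C ^ 2 * (k / Real.sqrt n)⁻¹) := by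
    rw [← Real.sqrt_sq (show 0 ≤ n / m by positivity), ← Real.sqrt_mul (by positivity)]
    apply Real.sqrt_le_sqrt
    calc (n / m) ^ 2 * (n * V) = (n ^ 2 * V / m) * (n / m) := by field_simp
      _ ≤ C * (C * (k / Real.sqrt n)⁻¹) := by gcongr
      _ = _ := by ring
  calc n ^ 2 / m ^ 2 * (3 * k * V + n * V * Real.sqrt (n * V))
      = 3 * ((n ^ 2 * V / m) * (k / m)) +
        (n ^ 2 * V / m) * (n / m * Real.sqrt (n * V)) := by field_simp
    _ ≤ 3 * (C * (C * (Real.sqrt n)⁻¹)) +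
        C * Real.sqrt (C ^ 2 * (k / Real.sqrt n)⁻¹) := by gcongr
    _ = _ := by ring

/-- in all three regimes, `Σ_i a_i³ = k³/n² + o(m²/n²)`. -/
theorem cube_sum_asymptotics (A : (n : ℕ) → Fin n → ℕ) (m k : ℕ → ℕ)
    (hka : ∀ n, ∑ i, A n i = k n)
    (hk : Tendsto (fun n : ℕ => (k n : ℝ) / Real.sqrt n) atTop atTop)
    (hreg : SomeRegime A m k) :
    Tendsto (fun n : ℕ => (n : ℝ) ^ 2 / (m n : ℝ) ^ 2 *
        ((∑ i, (A n i : ℝ) ^ 3) - (k n : ℝ) ^ 3 / (n : ℝ) ^ 2)) atTop (𝓝 0) := by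
  have hk0 : ∀ᶠ n in atTop, 0 < k n := by
    filter_upwards [hk.eventually_gt_atTop 0] with n hn
    rcases Nat.eq_zero_or_pos (k n) with h | h
    · simp [h] at hn
    · exact h
  obtain ⟨C, hC, hbd⟩ : ∃ C : ℝ, 0 < C ∧ ∀ᶠ n : ℕ in atTop,
      (n : ℝ) ^ 2 * plantV n (A n) ≤ C * m n ∧ k n * Real.sqrt n ≤ C * m n := by
    rcases hreg with ⟨c, hc, h⟩ | ⟨lam, c, hlam, hc, h⟩ | ⟨c, hc, h⟩
    · exact exists_const_of_tendsto A m k 0 c le_rfl hc hk0 h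
    · exact exists_const_of_tendsto A m k lam c hlam.le hc hk0 h
    · exact exists_const_of_hilly A m k c hc hk0 h
  have hlim : Tendsto (fun n : ℕ => 3 * C ^ 2 * (Real.sqrt n)⁻¹ +
      C * Real.sqrt (C ^ 2 * ((k n : ℝ) / Real.sqrt n)⁻¹)) atTop (𝓝 0) := by
    have hs : Tendsto (fun n : ℕ => (Real.sqrt n)⁻¹) atTop (𝓝 0) :=
      (Real.tendsto_sqrt_atTop.comp tendsto_natCast_atTop_atTop).inv_tendsto_atTop
    have hk' : Tendsto (fun n : ℕ => ((k n : ℝ) / Real.sqrt n)⁻¹) atTop (𝓝 0) :=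
      hk.inv_tendsto_atTop
    simpa using (hs.const_mul (3 * C ^ 2)).add ((hk'.const_mul (C ^ 2)).sqrt.const_mul C)
  refine squeeze_zero_norm' ?_ hlim
  filter_upwards [hbd, hk0, eventually_gt_atTop 0] with n hb hkn hn
  have hn' : (0 : ℝ) < n := by exact_mod_cast hn
  have hk' : (0 : ℝ) < k n := by exact_mod_cast hkn
  have hs : 0 < Real.sqrt n := Real.sqrt_pos.2 hn'
  have hm' : (0 : ℝ) < m n :=
    pos_of_mul_pos_right ((mul_pos hk' hs).trans_le hb.2) hC.le
  have hK : ∑ i, (A n i : ℝ) = k n := by exact_mod_cast hka n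
  have hD := abs_cube_sum_sub_le n hn (A n)
  rw [hK] at hD
  rw [Real.norm_eq_abs, abs_mul, abs_of_nonneg (by positivity)]
  exact (mul_le_mul_of_nonneg_left hD (by positivity)).trans
    (scaled_bound n (m n) (k n) _ C hn' hm' hk' (plantV_nonneg n hn _) hC hb.1 hb.2)
end
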